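/- The maximum number of pairs of points at distance exactly 2 among n ≥ 2 points in ℝ³ with pairwise distances at least 2 is strictly less than 6n − 0.926·n^(2/3). -/

import Mathlib

open scoped Classical

noncomputable section

/-- Twice the contact number: the number of ordered pairs of distinct centers in `P`
at distance exactly `2`. -/
def contactsOrdered {d : ℕ} (P : Finset (EuclideanSpace ℝ (Fin d))) : ℕ :=
  (P.offDiag.filter fun p => dist p.1 p.2 = 2).card

/-!
A unit ball touches at most twelve others, so `12 n - contactsOrdered P` is a total deficit `∑ x,
(12 - deg x)`, and it must be shown that a packing of finite extent has to leave contacts unused.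

Call a direction free at a centre `x` if it makes an angle at least `π / 3` with all the contact
directions at `x`. If a cuboctahedron is rotated at random about `x`, its vertices in free
directions together with the contact directions form a kissing configuration, which has at most
twelve points. Averaging over the rotations, the free directions at `x` occupy at most the
proportion `(12 - deg x) / 12` of the sphere. A point at distance more than `2` and at most `R`
from the set `P` of centres lies in a free direction from the centre nearest to it. The volume
gained by thickening the union of the balls of radius `2` to the union of the balls of radius `R`
is therefore at most `1 / 12` of the deficit times the volume of a spherical shell. On the other
hand this union contains `n` disjoint unit balls, so it is large, and by the Loomis–Whitney
inequality and the inequality of means a large set gains much volume by thickening. The bound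
results from `R = 11 / 5`.

The kissing number is bounded by Delsarte's linear programming method in the form of Musin:
Legendre polynomials of inner products are positive definite on the sphere by their addition
theorem, and the test function may be positive near `-1` because the points of a kissing
configuration close to the antipode of one of them crowd each other out.
-/

open scoped InnerProductSpace

local notation "E3" => EuclideanSpace ℝ (Fin 3)

section LegendrePolynomials

open Polynomial
open scoped ComplexConjugate

theorem mul_sum_of_chebyshev_recurrence {σ : ℝ} {r : ℕ → ℝ} (hr₀ : r 0 = 1)
    (hr : ∀ m, r (m + 2) = 2 * r 1 * r (m + 1) - σ * r m) (T : ℕ → ℝ) (M : ℕ) :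
    r 1 * (T 0 + 2 * ∑ m ∈ Finset.range M, T (m + 1) * r (m + 1))
      = σ * T 1 + ∑ m ∈ Finset.range M, (T m + σ * T (m + 2)) * r (m + 1)
        + T M * r (M + 1) - σ * T (M + 1) * r M := by
  induction M with
  | zero => simp only [Finset.range_zero, Finset.sum_empty, hr₀]; ring
  | succ M ih =>
    rw [Finset.sum_range_succ, Finset.sum_range_succ]
    linear_combination ih - T (M + 1) * hr M

theorem re_pow_recurrence (z : ℂ) (m : ℕ) :
    (z ^ (m + 2)).re = 2 * z.re * (z ^ (m + 1)).re - Complex.normSq z * (z ^ m).re := by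
  have h : z * z = (2 * z.re : ℝ) * z - (Complex.normSq z : ℝ) := by
    apply Complex.ext <;> simp [Complex.normSq_apply] <;> ring
  have h' : z ^ (m + 2) = (2 * z.re : ℝ) * z ^ (m + 1) - (Complex.normSq z : ℝ) * z ^ m := by
    linear_combination z ^ m * h
  rw [h', Complex.sub_re, Complex.re_ofReal_mul, Complex.re_ofReal_mul]

theorem sum_sum_mul_re_pow_nonneg {ι : Type*} [Fintype ι] (q : ι → ℝ) (z : ι → ℂ) (m : ℕ) :
    0 ≤ ∑ i, ∑ j, q i * q j * ((z i * conj (z j)) ^ m).re := by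
  have h : ∑ i, ∑ j, q i * q j * ((z i * conj (z j)) ^ m).re
      = Complex.normSq (∑ i, q i * z i ^ m) := by
    rw [← Complex.ofReal_re (Complex.normSq _), ← Complex.mul_conj, map_sum, Finset.sum_mul_sum]
    simp only [Complex.re_sum]
    refine Finset.sum_congr rfl fun i _ => Finset.sum_congr rfl fun j _ => ?_
    rw [← Complex.re_ofReal_mul]
    simp only [map_mul, map_pow, Complex.conj_ofReal, mul_pow, Complex.ofReal_mul]
    ring_nf
  exact h ▸ Complex.normSq_nonneg _

/-- The Legendre polynomials, normalised by `legendre n = 1` at `1` and defined by Bonnet's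
recurrence. -/
def legendre : ℕ → ℝ[X]
  | 0 => 1
  | 1 => X
  | n + 2 => C ((2 * n + 3) / (n + 2) : ℝ) * (X * legendre (n + 1))
      - C ((n + 1) / (n + 2) : ℝ) * legendre n

namespace legendre

theorem bonnet (n : ℕ) :
    ((n : ℝ[X]) + 2) * legendre (n + 2)
      = (2 * (n : ℝ[X]) + 3) * (X * legendre (n + 1)) - ((n : ℝ[X]) + 1) * legendre n := by
  have h (a : ℝ) : ((n : ℝ[X]) + 2) * C (a / (n + 2)) = C a := by
    rw [show (n : ℝ[X]) + 2 = C ((n : ℝ) + 2) by simp [C_ofNat], ← C_mul]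
    congr 1
    field_simp
  rw [legendre, mul_sub, ← mul_assoc, ← mul_assoc (_ + 2), h, h]
  simp [C_ofNat]

theorem natDegree_le (n : ℕ) : (legendre n).natDegree ≤ n := by
  induction n using Nat.twoStepInduction with
  | zero => simp [legendre]
  | one => simp [legendre]
  | more n ih₀ ih₁ =>
    rw [legendre]
    have h : (X * legendre (n + 1)).natDegree ≤ n + 2 :=
      (natDegree_mul_le_of_le natDegree_X_le ih₁).trans_eq (by ring)
    exact (natDegree_sub_le_of_le ((natDegree_C_mul_le _ _).trans h)
      ((natDegree_C_mul_le _ _).trans (ih₀.trans (n.le_add_right 2)))).trans_eq (max_self _)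

theorem iterate_derivative_eq_zero {n m : ℕ} (h : n < m) : derivative^[m] (legendre n) = 0 :=
  Polynomial.iterate_derivative_eq_zero ((natDegree_le n).trans_lt h)

theorem derivative_succ_and_X_mul_derivative_succ (n : ℕ) :
    derivative (legendre (n + 1))
        = X * derivative (legendre n) + ((n : ℝ[X]) + 1) * legendre n ∧
      X * derivative (legendre (n + 1))
        = derivative (legendre n) + ((n : ℝ[X]) + 1) * legendre (n + 1) := by
  induction n with
  | zero => simp [legendre]
  | succ n ih =>
    obtain ⟨ih₁, ih₂⟩ := ih
    have hB := bonnet n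
    have hB' := congrArg derivative hB
    simp only [derivative_mul, derivative_sub, derivative_add, derivative_natCast, derivative_X,
      derivative_ofNat, derivative_one] at hB'
    have hn : ((n : ℝ[X]) + 2) ≠ 0 := by exact_mod_cast (by lia : n + 2 ≠ 0)
    have h₁ : derivative (legendre (n + 2))
        = X * derivative (legendre (n + 1)) + ((n : ℝ[X]) + 2) * legendre (n + 1) :=
      mul_left_cancel₀ hn (by linear_combination hB' + (n + 1) * ih₂)
    push_cast
    refine ⟨by linear_combination h₁, ?_⟩
    linear_combination X * h₁ - hB - ih₁ + X * ih₂

theorem iterate_derivative_succ (n k : ℕ) :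
    derivative^[k + 1] (legendre (n + 1))
      = X * derivative^[k + 1] (legendre n)
        + ((n : ℝ[X]) + (k : ℝ[X]) + 1) * derivative^[k] (legendre n) := by
  induction k with
  | zero => simpa using (derivative_succ_and_X_mul_derivative_succ n).1
  | succ k ih =>
    have := congrArg derivative ih
    simp only [derivative_mul, derivative_add, derivative_natCast, derivative_X, derivative_one,
      ← Function.iterate_succ_apply'] at this
    push_cast
    linear_combination this

theorem X_mul_iterate_derivative_succ (n k : ℕ) :
    X * derivative^[k + 1] (legendre (n + 1))
      = derivative^[k + 1] (legendre n)
        + ((n : ℝ[X]) + 1 - (k : ℝ[X])) * derivative^[k] (legendre (n + 1)) := by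
  induction k with
  | zero => simpa using (derivative_succ_and_X_mul_derivative_succ n).2
  | succ k ih =>
    have := congrArg derivative ih
    simp only [derivative_mul, derivative_add, derivative_sub, derivative_natCast, derivative_X,
      derivative_one, ← Function.iterate_succ_apply'] at this
    push_cast
    linear_combination this

theorem one_sub_sq_mul_iterate_derivative (n k : ℕ) :
    (1 - X ^ 2) * derivative^[k + 2] (legendre (n + 1))
      = 2 * ((k : ℝ[X]) + 1) * (X * derivative^[k + 1] (legendre (n + 1)))
        - ((n : ℝ[X]) + (k : ℝ[X]) + 2) * ((n : ℝ[X]) + 1 - (k : ℝ[X]))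
          * derivative^[k] (legendre (n + 1)) := by
  have h₁ := iterate_derivative_succ n (k + 1)
  have h₂ := X_mul_iterate_derivative_succ n (k + 1)
  have h₃ := X_mul_iterate_derivative_succ n k
  push_cast at h₁ h₂ h₃
  linear_combination h₁ - X * h₂ - (n + k + 2) * h₃

/-- The coefficient of `cos (m φ)` in the addition theorem for the `n`-th Legendre polynomial, as a
function of the heights `c` and `d` of two unit vectors with longitudes differing by `φ`; for
`m ≠ 0` it enters with a factor `2`. For `m > n` the subtraction truncates, but the derivatives
vanish. -/
def additionTerm (c d : ℝ) (n m : ℕ) : ℝ :=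
  (n - m).factorial / (n + m).factorial *
    ((derivative^[m] (legendre n)).eval c * (derivative^[m] (legendre n)).eval d)

theorem additionTerm_eq_zero (c d : ℝ) {n m : ℕ} (h : n < m) : additionTerm c d n m = 0 := by
  simp [additionTerm, iterate_derivative_eq_zero h]

theorem additionTerm_zero_recurrence (c d : ℝ) (n : ℕ) :
    (n + 2) * additionTerm c d (n + 2) 0 + (n + 1) * additionTerm c d n 0
      = (2 * n + 3) * (c * d * additionTerm c d (n + 1) 0
          + (1 - c ^ 2) * (1 - d ^ 2) * additionTerm c d (n + 1) 1) := by
  have key (x : ℝ) : (1 - x ^ 2) * (derivative (legendre (n + 1))).eval x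
      = (n + 1) * ((legendre n).eval x - x * (legendre (n + 1)).eval x) := by
    obtain ⟨h₁, h₂⟩ := derivative_succ_and_X_mul_derivative_succ n
    have := congrArg (eval x) (by linear_combination h₁ - X * h₂ :
      (1 - X ^ 2) * derivative (legendre (n + 1))
        = ((n : ℝ[X]) + 1) * (legendre n - X * legendre (n + 1)))
    simpa using this
  have hB (x : ℝ) : (legendre (n + 2)).eval x
      = ((2 * n + 3) * (x * (legendre (n + 1)).eval x) - (n + 1) * (legendre n).eval x)
        / (n + 2) := by
    rw [eq_div_iff (by positivity), mul_comm]
    simpa using congrArg (eval x) (bonnet n)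
  have h₁ : (1 - c ^ 2) * (1 - d ^ 2) * additionTerm c d (n + 1) 1
      = (n + 1) / (n + 2) * (((legendre n).eval c - c * (legendre (n + 1)).eval c)
          * ((legendre n).eval d - d * (legendre (n + 1)).eval d)) := by
    calc (1 - c ^ 2) * (1 - d ^ 2) * additionTerm c d (n + 1) 1
        = ((n.factorial : ℝ) / (n + 1 + 1).factorial)
          * (((1 - c ^ 2) * (derivative (legendre (n + 1))).eval c)
            * ((1 - d ^ 2) * (derivative (legendre (n + 1))).eval d)) := by
          simp only [additionTerm, add_tsub_cancel_right, Function.iterate_one]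
          ring
      _ = _ := by
        rw [key, key, Nat.factorial_succ, Nat.factorial_succ]
        push_cast
        field_simp
        ring
  have h₀ (k : ℕ) : additionTerm c d k 0 = (legendre k).eval c * (legendre k).eval d := by
    simp [additionTerm, div_self, Nat.factorial_ne_zero]
  rw [h₁, h₀, h₀, h₀, hB, hB]
  field_simp
  ring

theorem additionTerm_succ_recurrence_of_lt (c d : ℝ) {n m : ℕ} (h : m < n) :
    2 * ((n + 2) * additionTerm c d (n + 2) (m + 1) + (n + 1) * additionTerm c d n (m + 1))
      = (2 * n + 3) * (2 * (c * d) * additionTerm c d (n + 1) (m + 1)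
          + additionTerm c d (n + 1) m
          + (1 - c ^ 2) * (1 - d ^ 2) * additionTerm c d (n + 1) (m + 2)) := by
  obtain ⟨k, rfl⟩ := Nat.exists_eq_add_of_le' (Nat.succ_le_of_lt h)
  have hup (x : ℝ) := congrArg (eval x) (iterate_derivative_succ (k + m.succ + 1) m)
  have hdown (x : ℝ) := congrArg (eval x) (X_mul_iterate_derivative_succ (k + m.succ) m)
  have hode (x : ℝ) := congrArg (eval x) (one_sub_sq_mul_iterate_derivative (k + m.succ) m)
  simp only [eval_add, eval_sub, eval_mul, eval_X, eval_natCast, eval_one, eval_pow, eval_ofNat,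
    Nat.cast_add, Nat.cast_one] at hup hdown hode
  have h₂ : (1 - c ^ 2) * (1 - d ^ 2) * additionTerm c d (k + m.succ + 1) (m + 2)
      = k.factorial / (k + m + m + 1 + 1 + 1 + 1).factorial
        * (((1 - c ^ 2) * (derivative^[m + 2] (legendre (k + m.succ + 1))).eval c)
          * ((1 - d ^ 2) * (derivative^[m + 2] (legendre (k + m.succ + 1))).eval d)) := by
    rw [additionTerm, show k + m.succ + 1 - (m + 2) = k by lia,
      show k + m.succ + 1 + (m + 2) = k + m + m + 1 + 1 + 1 + 1 by lia]
    ring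
  rw [h₂, hode, hode]
  simp only [additionTerm, hup, ← sub_eq_iff_eq_add.2 (hdown _)]
  rw [show k + m.succ + 2 - (m + 1) = k + 1 + 1 by lia, show k + m.succ - (m + 1) = k by lia,
    show k + m.succ + 1 - (m + 1) = k + 1 by lia, show k + m.succ + 1 - m = k + 1 + 1 by lia,
    show k + m.succ + 2 + (m + 1) = k + m + m + 1 + 1 + 1 + 1 by lia,
    show k + m.succ + (m + 1) = k + m + m + 1 + 1 by lia,
    show k + m.succ + 1 + (m + 1) = k + m + m + 1 + 1 + 1 by lia,
    show k + m.succ + 1 + m = k + m + m + 1 + 1 by lia]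
  simp only [Nat.factorial_succ (_ + 1), Nat.factorial_succ k]
  push_cast
  generalize (derivative^[m + 1] (legendre (k + m.succ + 1))).eval c = a
  generalize (derivative^[m] (legendre (k + m.succ + 1))).eval c = a'
  generalize (derivative^[m + 1] (legendre (k + m.succ + 1))).eval d = b
  generalize (derivative^[m] (legendre (k + m.succ + 1))).eval d = b'
  field_simp
  ring

theorem additionTerm_succ_recurrence (c d : ℝ) (n m : ℕ) :
    2 * ((n + 2) * additionTerm c d (n + 2) (m + 1) + (n + 1) * additionTerm c d n (m + 1))
      = (2 * n + 3) * (2 * (c * d) * additionTerm c d (n + 1) (m + 1)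
          + additionTerm c d (n + 1) m
          + (1 - c ^ 2) * (1 - d ^ 2) * additionTerm c d (n + 1) (m + 2)) := by
  have hup (x : ℝ) := congrArg (eval x) (iterate_derivative_succ (n + 1) m)
  simp only [eval_add, eval_mul, eval_X, eval_natCast, eval_one, Nat.cast_add, Nat.cast_one] at hup
  obtain h | rfl | rfl | h : m < n ∨ m = n ∨ m = n + 1 ∨ n + 1 < m := by lia
  · exact additionTerm_succ_recurrence_of_lt c d h
  · have hm (x : ℝ) : (derivative^[m] (legendre (m + 1))).eval x
        = x * (derivative^[m + 1] (legendre (m + 1))).eval x := by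
      have h := congrArg (eval x) (X_mul_iterate_derivative_succ m m)
      rw [iterate_derivative_eq_zero m.lt_succ_self] at h
      simpa using h.symm
    rw [additionTerm_eq_zero c d m.lt_succ_self,
      additionTerm_eq_zero c d (m + 1).lt_succ_self]
    simp only [additionTerm, hup, hm]
    rw [show m + 2 + (m + 1) = m + 1 + m + 1 + 1 by ring,
      show m + 1 + (m + 1) = m + 1 + m + 1 by ring, Nat.factorial_succ (m + 1 + m + 1),
      Nat.factorial_succ (m + 1 + m)]
    simp only [Nat.reduceSubDiff, add_tsub_cancel_left, tsub_self, Nat.factorial_zero,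
      Nat.factorial_one]
    push_cast
    field_simp
    ring
  · rw [additionTerm_eq_zero c d (by lia : n < n + 1 + 1),
      additionTerm_eq_zero c d (by lia : n + 1 < n + 1 + 1),
      additionTerm_eq_zero c d (by lia : n + 1 < n + 1 + 2)]
    simp only [additionTerm, hup, iterate_derivative_eq_zero (n + 1).lt_succ_self, eval_zero]
    rw [show n + 2 + (n + 1 + 1) = n + 1 + (n + 1) + 1 + 1 by ring, Nat.factorial_succ,
      Nat.factorial_succ]
    simp only [tsub_self, Nat.factorial_zero]
    push_cast
    field_simp
    ring
  · repeat rw [additionTerm_eq_zero c d (by lia)]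
    ring

/-- The addition theorem for Legendre polynomials. The sequence `r` stands for
`(1 - c²) ^ (m / 2) * (1 - d²) ^ (m / 2) * cos (m φ)`. -/
theorem eval_mul_add {c d : ℝ} {r : ℕ → ℝ} (hr₀ : r 0 = 1)
    (hr : ∀ m, r (m + 2) = 2 * r 1 * r (m + 1) - (1 - c ^ 2) * (1 - d ^ 2) * r m)
    {n M : ℕ} (hn : n ≤ M) :
    (legendre n).eval (c * d + r 1) = additionTerm c d n 0
      + 2 * ∑ m ∈ Finset.range M, additionTerm c d n (m + 1) * r (m + 1) := by
  induction n using Nat.twoStepInduction with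
  | zero =>
    rw [Finset.sum_eq_zero fun m _ => by rw [additionTerm_eq_zero c d m.succ_pos, zero_mul]]
    simp [additionTerm, legendre]
  | one =>
    obtain ⟨M, rfl⟩ := Nat.exists_eq_add_of_le' hn
    rw [Finset.sum_range_succ', Finset.sum_eq_zero fun m _ => by
      rw [additionTerm_eq_zero c d (by lia), zero_mul]]
    simp [additionTerm, legendre]
  | more n ih₀ ih₁ =>
    specialize ih₀ (by lia)
    specialize ih₁ (by lia)
    have hB := congrArg (eval (c * d + r 1)) (bonnet n)
    simp only [eval_add, eval_sub, eval_mul, eval_X, eval_natCast, eval_one, eval_ofNat] at hB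
    have hmul := mul_sum_of_chebyshev_recurrence hr₀ hr (additionTerm c d (n + 1)) M
    rw [additionTerm_eq_zero c d (by lia : n + 1 < M),
      additionTerm_eq_zero c d (by lia : n + 1 < M + 1)] at hmul
    have hsum : ∑ m ∈ Finset.range M, 2 * ((n + 2) * additionTerm c d (n + 2) (m + 1)
          + (n + 1) * additionTerm c d n (m + 1)) * r (m + 1)
        = (2 * n + 3) * ∑ m ∈ Finset.range M, (2 * (c * d) * additionTerm c d (n + 1) (m + 1)
          + additionTerm c d (n + 1) m
          + (1 - c ^ 2) * (1 - d ^ 2) * additionTerm c d (n + 1) (m + 2)) * r (m + 1) := by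
      rw [Finset.mul_sum]
      exact Finset.sum_congr rfl fun m _ => by rw [additionTerm_succ_recurrence]; ring
    simp only [mul_add, add_mul, Finset.sum_add_distrib, mul_assoc, ← Finset.mul_sum] at hsum hmul
    have hn₀ : (n : ℝ) + 2 ≠ 0 := by positivity
    apply mul_left_cancel₀ hn₀
    rw [hB, ih₀, ih₁]
    linear_combination (2 * n + 3 : ℝ) * hmul - hsum - additionTerm_zero_recurrence c d n

theorem sum_sum_eval_inner_nonneg (n : ℕ) {ι : Type*} [Fintype ι] {v : ι → E3}
    (hv : ∀ i, ‖v i‖ = 1) : 0 ≤ ∑ i, ∑ j, (legendre n).eval ⟪v i, v j⟫_ℝ := by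
  let z (i : ι) : ℂ := ⟨v i 0, v i 1⟩
  have hz (i : ι) : Complex.normSq (z i) = 1 - v i 2 ^ 2 := by
    have := EuclideanSpace.real_norm_sq_eq (v i)
    rw [hv, Fin.sum_univ_three] at this
    simp only [z, Complex.normSq_apply]
    linarith
  let r (i j : ι) (m : ℕ) : ℝ := ((z i * conj (z j)) ^ m).re
  have hinner (i j : ι) : ⟪v i, v j⟫_ℝ = v i 2 * v j 2 + r i j 1 := by
    simp only [r, z, PiLp.inner_apply, RCLike.inner_apply, Real.ringHom_apply,
      Fin.sum_univ_three, pow_one, Complex.mul_re, Complex.conj_re, Complex.conj_im]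
    ring
  have hrec (i j : ι) (m : ℕ) : r i j (m + 2)
      = 2 * r i j 1 * r i j (m + 1) - (1 - v i 2 ^ 2) * (1 - v j 2 ^ 2) * r i j m := by
    simp only [r, re_pow_recurrence, map_mul, Complex.normSq_conj, hz, pow_one]
  have hterm (m : ℕ) : 0 ≤ ∑ i, ∑ j, additionTerm (v i 2) (v j 2) n m * r i j m := by
    have h := sum_sum_mul_re_pow_nonneg
      (fun i => (derivative^[m] (legendre n)).eval (v i 2)) z m
    have hw : (0 : ℝ) ≤ (n - m).factorial / (n + m).factorial := by positivity
    simpa only [additionTerm, Finset.mul_sum, mul_assoc] using mul_nonneg hw h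
  have hexp (i j : ι) : (legendre n).eval ⟪v i, v j⟫_ℝ
      = additionTerm (v i 2) (v j 2) n 0 * r i j 0
        + 2 * ∑ m ∈ Finset.range n, additionTerm (v i 2) (v j 2) n (m + 1) * r i j (m + 1) := by
    rw [hinner, eval_mul_add (by simp [r]) (hrec i j) le_rfl]
    simp [r]
  have hsum : ∑ i, ∑ j, (legendre n).eval ⟪v i, v j⟫_ℝ
      = ∑ i, ∑ j, additionTerm (v i 2) (v j 2) n 0 * r i j 0
        + 2 * ∑ m ∈ Finset.range n,
          ∑ i, ∑ j, additionTerm (v i 2) (v j 2) n (m + 1) * r i j (m + 1) := by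
    simp only [hexp, Finset.sum_add_distrib, ← Finset.mul_sum]
    congr 2
    exact (Finset.sum_congr rfl fun _ _ => Finset.sum_comm).trans Finset.sum_comm
  rw [hsum]
  exact add_nonneg (hterm 0) (mul_nonneg zero_le_two (Finset.sum_nonneg fun m _ => hterm (m + 1)))

end legendre

section Evaluations

variable (t : ℝ)

theorem eval_legendre_one : (legendre 1).eval t = t := by simp [legendre]

theorem eval_legendre_two : (legendre 2).eval t = (3 * t ^ 2 - 1) / 2 := by
  simp [legendre]; ring

theorem eval_legendre_three : (legendre 3).eval t = (5 * t ^ 3 - 3 * t) / 2 := by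
  simp [legendre]; ring

theorem eval_legendre_four : (legendre 4).eval t = (35 * t ^ 4 - 30 * t ^ 2 + 3) / 8 := by
  simp [legendre]; ring

theorem eval_legendre_nine : (legendre 9).eval t
    = (12155 * t ^ 9 - 25740 * t ^ 7 + 18018 * t ^ 5 - 4620 * t ^ 3 + 315 * t) / 128 := by
  simp [legendre]; ring

end Evaluations

end LegendrePolynomials

section LPFunction

/-- The test function of the linear programming bound for the kissing problem: a nonnegative
combination of Legendre polynomials, with coefficients found numerically. It is allowed to be
positive near `-1`, where the points are controlled by a separate geometric argument. -/
def lpFunction (t : ℝ) : ℝ :=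
  1 + 1.7570 * (legendre 1).eval t + 3.5088 * (legendre 2).eval t + 1.7022 * (legendre 3).eval t
    + 1.9826 * (legendre 4).eval t + 0.4597 * (legendre 9).eval t

theorem lpFunction_eq (t : ℝ) : lpFunction t
    = 1 + 1.7570 * t + 3.5088 * ((3 * t ^ 2 - 1) / 2) + 1.7022 * ((5 * t ^ 3 - 3 * t) / 2)
      + 1.9826 * ((35 * t ^ 4 - 30 * t ^ 2 + 3) / 8)
      + 0.4597
        * ((12155 * t ^ 9 - 25740 * t ^ 7 + 18018 * t ^ 5 - 4620 * t ^ 3 + 315 * t) / 128) := by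
  rw [lpFunction, eval_legendre_one, eval_legendre_two, eval_legendre_three, eval_legendre_four,
    eval_legendre_nine]

theorem sq_card_le_sum_sum_lpFunction {ι : Type*} [Fintype ι] {v : ι → E3} (hv : ∀ i, ‖v i‖ = 1) :
    (Fintype.card ι : ℝ) ^ 2 ≤ ∑ i, ∑ j, lpFunction ⟪v i, v j⟫_ℝ := by
  have h (n : ℕ) := legendre.sum_sum_eval_inner_nonneg n hv
  simp only [lpFunction, Finset.sum_add_distrib, ← Finset.mul_sum, Finset.sum_const,
    Finset.card_univ, nsmul_eq_mul, mul_one]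
  linarith [h 1, h 2, h 3, h 4, h 9]

/-- In a cap of height at least `√(1 / 2)`, points of height `t ≤ √3 / 2` contribute at most
`2.581 * lowCapWeight t` to the sum of `lpFunction`. The first factor is the weight for which the
total over a cap is at most `1`; the second one makes up for the presence of a higher point. -/
def lowCapWeight (t : ℝ) : ℝ := (2 * t ^ 2 - 1) * (1 - 7 / 4 * (3 / 4 - t ^ 2))

theorem sub_pow_mul_sub_pow_nonneg {a b t : ℝ} (hat : a ≤ t) (htb : t ≤ b) (j k : ℕ) :
    0 ≤ (t - a) ^ j * (b - t) ^ k :=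
  mul_nonneg (pow_nonneg (sub_nonneg.2 hat) _) (pow_nonneg (sub_nonneg.2 htb) _)

/-! Each of the following polynomial inequalities is certified by the nonnegativity of the
coefficients of a difference in the Bernstein basis of the interval. -/

theorem lpFunction_nonpos {t : ℝ} (h₁ : -0.70711 ≤ t) (h₂ : t ≤ 1 / 2) : lpFunction t ≤ 0 := by
  rw [lpFunction_eq]
  rcases le_total t (-0.422) with h | h
  · have B := sub_pow_mul_sub_pow_nonneg h₁ h
    linarith [B 0 9, B 1 8, B 2 7, B 3 6, B 4 5, B 5 4, B 6 3, B 7 2, B 8 1, B 9 0]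
  rcases le_total t 0.056 with h' | h'
  · have B := sub_pow_mul_sub_pow_nonneg h h'
    linarith [B 0 9, B 1 8, B 2 7, B 3 6, B 4 5, B 5 4, B 6 3, B 7 2, B 8 1, B 9 0]
  · have B := sub_pow_mul_sub_pow_nonneg h' h₂
    linarith [B 0 9, B 1 8, B 2 7, B 3 6, B 4 5, B 5 4, B 6 3, B 7 2, B 8 1, B 9 0]

theorem lpFunction_neg_le_lowCapWeight {t : ℝ} (h₁ : 0.7071 ≤ t) (h₂ : t ≤ 0.8661) :
    lpFunction (-t) ≤ 2.581 * lowCapWeight t := by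
  rw [lpFunction_eq, lowCapWeight]
  have B := sub_pow_mul_sub_pow_nonneg h₁ h₂
  linarith [B 0 9, B 1 8, B 2 7, B 3 6, B 4 5, B 5 4, B 6 3, B 7 2, B 8 1, B 9 0]

theorem lpFunction_neg_le_linear {t : ℝ} (h₁ : 0.866 ≤ t) (h₂ : t ≤ 0.967) :
    lpFunction (-t) ≤ 2.581 * (0.51 + 5.1 * (t - 0.87)) := by
  rw [lpFunction_eq]
  rcases le_total t 0.933 with h | h
  · have B := sub_pow_mul_sub_pow_nonneg h₁ h
    linarith [B 0 9, B 1 8, B 2 7, B 3 6, B 4 5, B 5 4, B 6 3, B 7 2, B 8 1, B 9 0]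
  · have B := sub_pow_mul_sub_pow_nonneg h h₂
    linarith [B 0 9, B 1 8, B 2 7, B 3 6, B 4 5, B 5 4, B 6 3, B 7 2, B 8 1, B 9 0]

theorem lpFunction_neg_le {t : ℝ} (h₁ : 0.866 ≤ t) (h₂ : t ≤ 1) : lpFunction (-t) ≤ 2.581 := by
  rw [lpFunction_eq]
  rcases le_total t 0.993 with h | h
  · have B := sub_pow_mul_sub_pow_nonneg h₁ h
    linarith [B 0 9, B 1 8, B 2 7, B 3 6, B 4 5, B 5 4, B 6 3, B 7 2, B 8 1, B 9 0]
  · have B := sub_pow_mul_sub_pow_nonneg h h₂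
    linarith [B 0 9, B 1 8, B 2 7, B 3 6, B 4 5, B 5 4, B 6 3, B 7 2, B 8 1, B 9 0]

theorem lowCapWeight_tradeoff {x R : ℝ} (h₁ : 0.7071 ≤ x) (h₂ : x ≤ 0.8661)
    (hR : R = (49 / 100 - lowCapWeight x) / (51 / 10) + 87 / 100) :
    0 ≤ R ^ 2 - R * x + x ^ 2 - 3 / 4 := by
  subst hR
  rw [lowCapWeight]
  have B := sub_pow_mul_sub_pow_nonneg h₁ h₂
  linarith [B 0 8, B 1 7, B 2 6, B 3 5, B 4 4, B 5 3, B 6 2, B 7 1, B 8 0]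

theorem lt_sqrt_half : 0.7071 < √(1 / 2) := Real.lt_sqrt_of_sq_lt (by norm_num)

theorem sqrt_half_lt : √(1 / 2) < 0.70711 := (Real.sqrt_lt' (by norm_num)).2 (by norm_num)

theorem half_le_sq_of_sqrt_half_le {x : ℝ} (hx : √(1 / 2) ≤ x) : 1 / 2 ≤ x ^ 2 :=
  (Real.sqrt_le_left ((Real.sqrt_nonneg _).trans hx)).1 hx

theorem lpFunction_neg_add_lowCapWeight_le {s x : ℝ} (hs : 3 / 4 < s ^ 2) (hx : √(1 / 2) ≤ x)
    (hxs : x ≤ s) (hsx : s ^ 2 + x ^ 2 - s * x = 3 / 4) :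
    lpFunction (-s) + 2.581 * lowCapWeight x ≤ 2.581 := by
  have hx₀ : 0.7071 ≤ x := lt_sqrt_half.le.trans hx
  have hx₁ : x ^ 2 ≤ 3 / 4 := by nlinarith
  have hx₂ : x ≤ 0.8661 := by nlinarith
  have hs₁ : s ≤ 0.967 := by
    have hs₂ : s ≤ 1 := by nlinarith [sq_nonneg (2 * x - s)]
    by_contra! h
    norm_num at h hx₀
    nlinarith [mul_nonneg (sub_nonneg.2 hx₀) (show 0 ≤ x + 7071 / 10000 - s by linarith)]
  have hs₀ : 0.866 ≤ s := by
    norm_num at hx₀ ⊢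
    nlinarith
  have hlin := lpFunction_neg_le_linear hs₀ hs₁
  obtain ⟨R, hR⟩ : ∃ R, R = (49 / 100 - lowCapWeight x) / (51 / 10) + 87 / 100 := ⟨_, rfl⟩
  have hR₀ : 0 < R := by
    have : lowCapWeight x ≤ 1 := by rw [lowCapWeight]; nlinarith
    linarith
  have hsR : s ≤ R := by
    by_contra! h
    have := lowCapWeight_tradeoff hx₀ hx₂ hR
    nlinarith [mul_pos (sub_pos.2 h) (show 0 < s + R - x by linarith)]
  norm_num at hlin ⊢
  linarith

theorem lpFunction_one_le : lpFunction 1 ≤ 10.411 := by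
  rw [lpFunction_eq]
  norm_num

end LPFunction

section KissingNumber

variable {V ι : Type*} [NormedAddCommGroup V] [InnerProductSpace ℝ V]

/-- A family of unit vectors at mutual angles at least `π / 3`: the directions of the contact
points of non-overlapping unit balls touching a central one. -/
def IsKissing (v : ι → V) : Prop :=
  (∀ i, ‖v i‖ = 1) ∧ Pairwise fun i j => ⟪v i, v j⟫_ℝ ≤ 1 / 2

/-- The component of `z` orthogonal to the unit vector `e`. -/
def tangential (e z : V) : V := z - ⟪z, e⟫_ℝ • e

theorem inner_tangential_tangential {e : V} (he : ‖e‖ = 1) (z w : V) :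
    ⟪tangential e z, tangential e w⟫_ℝ = ⟪z, w⟫_ℝ - ⟪z, e⟫_ℝ * ⟪w, e⟫_ℝ := by
  simp only [tangential, inner_sub_left, inner_sub_right, real_inner_smul_left,
    real_inner_smul_right, real_inner_self_eq_norm_sq, he, real_inner_comm w e]
  ring

theorem norm_tangential_sq {e z : V} (he : ‖e‖ = 1) (hz : ‖z‖ = 1) :
    ‖tangential e z‖ ^ 2 = 1 - ⟪z, e⟫_ℝ ^ 2 := by
  rw [← real_inner_self_eq_norm_sq, inner_tangential_tangential he, real_inner_self_eq_norm_sq, hz]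
  ring

/-- The half-excess `√(t² - 1/2)` of a height `t` over the rim of the cap of angular radius
`π / 4`; as a square root of a negative number it is `0` when `t² < 1/2`. -/
def capExcess (t : ℝ) : ℝ := √(t ^ 2 - 1 / 2)

/-- The total weight of the points of a cap centred at `e`, a point of height `t` having weight
`2 t² - 1 = 2 (capExcess t)²`. -/
def capMass (e : V) (v : ι → V) (s : Finset ι) : ℝ := ∑ i ∈ s, (2 * ⟪v i, e⟫_ℝ ^ 2 - 1)

/-- The weighted sum of the tangential parts of the points of a cap, for which the off-diagonal
terms of `‖capVector e v s‖²` are controlled by those of `(capMass e v s)²`. -/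
def capVector (e : V) (v : ι → V) (s : Finset ι) : V :=
  ∑ i ∈ s, (2 * capExcess ⟪v i, e⟫_ℝ) • tangential e (v i)

theorem capExcess_nonneg (t : ℝ) : 0 ≤ capExcess t := Real.sqrt_nonneg _

theorem capExcess_sq {t : ℝ} (ht : √(1 / 2) ≤ t) : capExcess t ^ 2 = t ^ 2 - 1 / 2 :=
  Real.sq_sqrt (sub_nonneg.2 (half_le_sq_of_sqrt_half_le ht))

theorem capExcess_mul_capExcess_le {t u : ℝ} (ht : √(1 / 2) ≤ t) (hu : √(1 / 2) ≤ u) :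
    capExcess t * capExcess u ≤ t * u - 1 / 2 := by
  have h : 1 / 2 ≤ t * u := by
    have := mul_le_mul ht hu (Real.sqrt_nonneg _) ((Real.sqrt_nonneg _).trans ht)
    rwa [Real.mul_self_sqrt (by norm_num)] at this
  refine le_of_sq_le_sq ?_ (sub_nonneg.2 h)
  rw [mul_pow, capExcess_sq ht, capExcess_sq hu]
  nlinarith [sq_nonneg (t - u)]

theorem capMass_nonneg {e : V} {v : ι → V} {s : Finset ι}
    (hs : ∀ i ∈ s, √(1 / 2) ≤ ⟪v i, e⟫_ℝ) : 0 ≤ capMass e v s :=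
  Finset.sum_nonneg fun i hi => by linarith [half_le_sq_of_sqrt_half_le (hs i hi)]

theorem norm_capVector_sq_le {e : V} {v : ι → V} {s : Finset ι} (he : ‖e‖ = 1) (hv : IsKissing v)
    (hs : ∀ i ∈ s, √(1 / 2) ≤ ⟪v i, e⟫_ℝ) :
    ‖capVector e v s‖ ^ 2 ≤ capMass e v s - capMass e v s ^ 2 := by
  have hmass : capMass e v s - capMass e v s ^ 2 = ∑ i ∈ s, ∑ j ∈ s,
      ((if i = j then 2 * ⟪v i, e⟫_ℝ ^ 2 - 1 else 0)
        - (2 * ⟪v i, e⟫_ℝ ^ 2 - 1) * (2 * ⟪v j, e⟫_ℝ ^ 2 - 1)) := by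
    rw [capMass, sq, Finset.sum_mul_sum, ← Finset.sum_sub_distrib]
    refine Finset.sum_congr rfl fun i hi => ?_
    rw [Finset.sum_sub_distrib, Finset.sum_ite_eq, if_pos hi]
  rw [hmass, ← real_inner_self_eq_norm_sq, capVector, sum_inner]
  refine Finset.sum_le_sum fun i hi => ?_
  rw [inner_sum]
  refine Finset.sum_le_sum fun j hj => ?_
  rw [real_inner_smul_left, real_inner_smul_right, inner_tangential_tangential he]
  have hi₂ := capExcess_sq (hs i hi)
  have hj₂ := capExcess_sq (hs j hj)
  split_ifs with hij
  · subst hij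
    rw [real_inner_self_eq_norm_sq, hv.1]
    linear_combination 4 * (1 - ⟪v i, e⟫_ℝ ^ 2) * hi₂
  · have hpair : ⟪v i, v j⟫_ℝ - ⟪v i, e⟫_ℝ * ⟪v j, e⟫_ℝ
        ≤ -(capExcess ⟪v i, e⟫_ℝ * capExcess ⟪v j, e⟫_ℝ) := by
      linarith [hv.2 hij, capExcess_mul_capExcess_le (hs i hi) (hs j hj)]
    have hmul := mul_le_mul_of_nonneg_left hpair (show
      0 ≤ 4 * (capExcess ⟪v i, e⟫_ℝ * capExcess ⟪v j, e⟫_ℝ) from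
      mul_nonneg zero_le_four (mul_nonneg (capExcess_nonneg _) (capExcess_nonneg _)))
    have hprod : (2 * ⟪v i, e⟫_ℝ ^ 2 - 1) * (2 * ⟪v j, e⟫_ℝ ^ 2 - 1)
        = 4 * (capExcess ⟪v i, e⟫_ℝ ^ 2 * capExcess ⟪v j, e⟫_ℝ ^ 2) := by
      rw [hi₂, hj₂]; ring
    rw [hprod]
    linarith

theorem capMass_le_one {e : V} {v : ι → V} {s : Finset ι} (he : ‖e‖ = 1) (hv : IsKissing v)
    (hs : ∀ i ∈ s, √(1 / 2) ≤ ⟪v i, e⟫_ℝ) : capMass e v s ≤ 1 := by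
  nlinarith [norm_capVector_sq_le he hv hs, sq_nonneg ‖capVector e v s‖]

-- Cauchy–Schwarz for the tangential part of `h` and `capVector e v s`.
theorem sq_mul_capMass_le {e h : V} {v : ι → V} {s : Finset ι} {β : ℝ} (he : ‖e‖ = 1)
    (hh : ‖h‖ = 1) (hv : IsKissing v) (hs : ∀ i ∈ s, √(1 / 2) ≤ ⟪v i, e⟫_ℝ)
    (hhs : ∀ i ∈ s, ⟪h, v i⟫_ℝ ≤ 1 / 2) (hβ : 0 ≤ β)
    (hβs : ∀ i ∈ s, β * capExcess ⟪v i, e⟫_ℝ ≤ ⟪h, e⟫_ℝ * ⟪v i, e⟫_ℝ - 1 / 2) :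
    (β * capMass e v s) ^ 2
      ≤ (1 - ⟪h, e⟫_ℝ ^ 2) * (capMass e v s - capMass e v s ^ 2) := by
  have hinner : ⟪tangential e h, capVector e v s⟫_ℝ ≤ -(β * capMass e v s) := by
    rw [capVector, inner_sum, capMass, Finset.mul_sum, ← Finset.sum_neg_distrib]
    refine Finset.sum_le_sum fun i hi => ?_
    rw [real_inner_smul_right, inner_tangential_tangential he]
    have := mul_le_mul_of_nonneg_left (show ⟪h, v i⟫_ℝ - ⟪h, e⟫_ℝ * ⟪v i, e⟫_ℝ
        ≤ -(β * capExcess ⟪v i, e⟫_ℝ) by linarith [hhs i hi, hβs i hi])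
      (mul_nonneg zero_le_two (capExcess_nonneg ⟪v i, e⟫_ℝ))
    linear_combination this - 2 * β * capExcess_sq (hs i hi)
  have hβT : 0 ≤ β * capMass e v s := mul_nonneg hβ (capMass_nonneg hs)
  calc (β * capMass e v s) ^ 2 ≤ (‖tangential e h‖ * ‖capVector e v s‖) ^ 2 := by
        refine pow_le_pow_left₀ hβT ?_ 2
        linarith [neg_le_of_abs_le (abs_real_inner_le_norm (tangential e h) (capVector e v s))]
    _ = (1 - ⟪h, e⟫_ℝ ^ 2) * ‖capVector e v s‖ ^ 2 := by
        rw [mul_pow, norm_tangential_sq he hh]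
    _ ≤ _ := by
        refine mul_le_mul_of_nonneg_left (norm_capVector_sq_le he hv hs) ?_
        rw [← norm_tangential_sq he hh]
        positivity

theorem mul_capExcess_le {s x y : ℝ} (hy : √(1 / 2) ≤ y) (hyx : y ≤ x) (hxs : x ≤ s) :
    (s * x - 1 / 2) * capExcess y ≤ (s * y - 1 / 2) * capExcess x := by
  have hx := hy.trans hyx
  have hy₀ : 0 ≤ y := (Real.sqrt_nonneg _).trans hy
  have hy₂ := half_le_sq_of_sqrt_half_le hy
  have hsy : 0 ≤ s * y - 1 / 2 := by nlinarith
  refine le_of_sq_le_sq ?_ (mul_nonneg hsy (capExcess_nonneg x))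
  rw [mul_pow, mul_pow, capExcess_sq hx, capExcess_sq hy]
  have f₁ : 0 ≤ (s - x) * ((s + x) * (x + y) / 2 - x * y - 1 / 2) := by
    refine mul_nonneg (by linarith) ?_
    nlinarith [mul_nonneg (sub_nonneg.2 hxs) (by linarith : 0 ≤ x + y)]
  have f₂ : 0 ≤ (x - y) * (x ^ 2 / 2 - 1 / 4) :=
    mul_nonneg (by linarith) (by linarith [half_le_sq_of_sqrt_half_le hx])
  have f₃ : 0 ≤ s ^ 2 * (x + y) / 2 - s * x * y - s / 2 + (x + y) / 4 := by nlinarith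
  nlinarith [mul_nonneg (sub_nonneg.2 hyx) f₃]

-- `x = cos (π / 3 - arccos s)`: no point at angle at least `π / 3` from a point of height `s`
-- is higher than `x`.
theorem exists_companion_height {s : ℝ} (hs₀ : 0 ≤ s) (hs : 3 / 4 < s ^ 2) (hs₁ : s ≤ 1) :
    ∃ x, 0 ≤ x ∧ x ≤ s ∧ s ^ 2 + x ^ 2 - s * x = 3 / 4 ∧
      ∀ t, (s * t - 1 / 2) ^ 2 ≤ (1 - s ^ 2) * (1 - t ^ 2) → t ≤ x := by
  have hnn : 0 ≤ 3 / 4 * (1 - s ^ 2) := by nlinarith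
  have hsq := Real.sq_sqrt hnn
  have hle : √(3 / 4 * (1 - s ^ 2)) ≤ s / 2 := Real.sqrt_le_iff.2 ⟨by linarith, by nlinarith⟩
  refine ⟨s / 2 + √(3 / 4 * (1 - s ^ 2)), by positivity, by linarith, by nlinarith, ?_⟩
  intro t ht
  have := Real.abs_le_sqrt (show (t - s / 2) ^ 2 ≤ 3 / 4 * (1 - s ^ 2) by nlinarith)
  linarith [le_abs_self (t - s / 2)]

theorem sq_inner_mul_inner_sub_half_le {e h z : V} (he : ‖e‖ = 1) (hh : ‖h‖ = 1) (hz : ‖z‖ = 1)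
    (hhe : √(1 / 2) ≤ ⟪h, e⟫_ℝ) (hze : √(1 / 2) ≤ ⟪z, e⟫_ℝ) (hhz : ⟪h, z⟫_ℝ ≤ 1 / 2) :
    (⟪h, e⟫_ℝ * ⟪z, e⟫_ℝ - 1 / 2) ^ 2 ≤ (1 - ⟪h, e⟫_ℝ ^ 2) * (1 - ⟪z, e⟫_ℝ ^ 2) := by
  have hnn : 0 ≤ ⟪h, e⟫_ℝ * ⟪z, e⟫_ℝ - 1 / 2 :=
    (mul_nonneg (capExcess_nonneg _) (capExcess_nonneg _)).trans
      (capExcess_mul_capExcess_le hhe hze)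
  rw [← norm_tangential_sq he hh, ← norm_tangential_sq he hz, ← mul_pow]
  refine pow_le_pow_left₀ hnn ?_ 2
  have := neg_le_of_abs_le (abs_real_inner_le_norm (tangential e h) (tangential e z))
  rw [inner_tangential_tangential he] at this
  linarith

theorem capMass_le_of_high {e h : V} {v : ι → V} {s : Finset ι} {x : ℝ} (he : ‖e‖ = 1)
    (hh : ‖h‖ = 1) (hv : IsKissing v) (hs : ∀ i ∈ s, √(1 / 2) ≤ ⟪v i, e⟫_ℝ)
    (hhs : ∀ i ∈ s, ⟪h, v i⟫_ℝ ≤ 1 / 2) (hx : √(1 / 2) ≤ x) (hxh : x ≤ ⟪h, e⟫_ℝ)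
    (hcomp : ⟪h, e⟫_ℝ ^ 2 + x ^ 2 - ⟪h, e⟫_ℝ * x = 3 / 4) (hsx : ∀ i ∈ s, ⟪v i, e⟫_ℝ ≤ x) :
    capMass e v s ≤ 2 * x ^ 2 - 1 := by
  have hx₀ : 0 ≤ x := (Real.sqrt_nonneg _).trans hx
  have hx₂ := half_le_sq_of_sqrt_half_le hx
  rcases hx₂.eq_or_lt with hx' | hx'
  · rw [← hx', show (2 * (1 / 2) - 1 : ℝ) = 0 by norm_num]
    refine Finset.sum_nonpos fun i hi => ?_
    nlinarith [pow_le_pow_left₀ ((Real.sqrt_nonneg _).trans (hs i hi)) (hsx i hi) 2]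
  have hW : 0 < capExcess x := Real.sqrt_pos.2 (by linarith)
  have hsx₂ : 0 < 1 - ⟪h, e⟫_ℝ ^ 2 := by
    nlinarith [sq_nonneg (2 * x - ⟪h, e⟫_ℝ), sq_nonneg (x - 2 * ⟪h, e⟫_ℝ)]
  have key := sq_mul_capMass_le (β := (⟪h, e⟫_ℝ * x - 1 / 2) / capExcess x) he hh hv hs hhs
    (div_nonneg (by nlinarith) hW.le) fun i hi => by
      rw [div_mul_eq_mul_div, div_le_iff₀ hW]
      exact mul_capExcess_le (hs i hi) (hsx i hi) hxh
  have hT := capMass_nonneg hs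
  generalize capMass e v s = T at key hT ⊢
  generalize ⟪h, e⟫_ℝ = a at *
  -- The companion relation says `(a x - 1/2)² = (1 - a²) (1 - x²)`.
  have hquad : (1 - a ^ 2) * ((1 - x ^ 2) * T ^ 2)
      ≤ (1 - a ^ 2) * ((x ^ 2 - 1 / 2) * (T - T ^ 2)) := by
    rw [mul_pow, div_pow, capExcess_sq hx, div_mul_eq_mul_div, div_le_iff₀ (by linarith)] at key
    linear_combination key - T ^ 2 * hcomp
  have := le_of_mul_le_mul_left hquad hsx₂
  by_contra! hcon
  nlinarith

theorem sum_lpFunction_neg_le_mul_capMass {e : V} {v : ι → V} {s : Finset ι} {x : ℝ}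
    (hs : ∀ i ∈ s, √(1 / 2) ≤ ⟪v i, e⟫_ℝ) (hsx : ∀ i ∈ s, ⟪v i, e⟫_ℝ ^ 2 ≤ x ^ 2)
    (hx : x ^ 2 ≤ 3 / 4) :
    ∑ i ∈ s, lpFunction (-⟪v i, e⟫_ℝ)
      ≤ 2.581 * ((1 - 7 / 4 * (3 / 4 - x ^ 2)) * capMass e v s) := by
  rw [capMass, Finset.mul_sum, Finset.mul_sum]
  refine Finset.sum_le_sum fun i hi => ?_
  have h₀ := half_le_sq_of_sqrt_half_le (hs i hi)
  have h₁ := hsx i hi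
  refine (lpFunction_neg_le_lowCapWeight (lt_sqrt_half.le.trans (hs i hi)) ?_).trans ?_
  · exact le_of_sq_le_sq (by norm_num; linarith) (by norm_num)
  · rw [lowCapWeight, mul_comm (_ - 1)]
    gcongr
    linarith

theorem sum_lpFunction_neg_le_of_high {e h : V} {v : ι → V} {s : Finset ι} (he : ‖e‖ = 1)
    (hh : ‖h‖ = 1) (hv : IsKissing v) (hs : ∀ i ∈ s, √(1 / 2) ≤ ⟪v i, e⟫_ℝ)
    (hhs : ∀ i ∈ s, ⟪h, v i⟫_ℝ ≤ 1 / 2) (hhe : √(1 / 2) ≤ ⟪h, e⟫_ℝ)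
    (hhigh : 3 / 4 < ⟪h, e⟫_ℝ ^ 2) :
    lpFunction (-⟪h, e⟫_ℝ) + ∑ i ∈ s, lpFunction (-⟪v i, e⟫_ℝ) ≤ 2.581 := by
  have hh₁ : ⟪h, e⟫_ℝ ≤ 1 := by simpa [hh, he] using real_inner_le_norm h e
  obtain ⟨x, hx₀, hxh, hcomp, hmax⟩ :=
    exists_companion_height ((Real.sqrt_nonneg _).trans hhe) hhigh hh₁
  have hsx : ∀ i ∈ s, ⟪v i, e⟫_ℝ ≤ x := fun i hi =>
    hmax _ (sq_inner_mul_inner_sub_half_le he hh (hv.1 i) hhe (hs i hi) (hhs i hi))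
  rcases lt_or_ge x √(1 / 2) with hx | hx
  · have hs_empty : s = ∅ := Finset.eq_empty_of_forall_notMem fun i hi =>
      ((hs i hi).trans (hsx i hi)).not_gt hx
    rw [hs_empty, Finset.sum_empty, add_zero]
    exact lpFunction_neg_le (by nlinarith) hh₁
  · have hx₂ : x ^ 2 ≤ 3 / 4 := by nlinarith
    calc lpFunction (-⟪h, e⟫_ℝ) + ∑ i ∈ s, lpFunction (-⟪v i, e⟫_ℝ)
        ≤ lpFunction (-⟪h, e⟫_ℝ)
          + 2.581 * ((1 - 7 / 4 * (3 / 4 - x ^ 2)) * capMass e v s) := by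
          gcongr
          exact sum_lpFunction_neg_le_mul_capMass hs
            (fun i hi => pow_le_pow_left₀ ((Real.sqrt_nonneg _).trans (hs i hi)) (hsx i hi) 2) hx₂
      _ ≤ lpFunction (-⟪h, e⟫_ℝ) + 2.581 * lowCapWeight x := by
          rw [lowCapWeight, mul_comm (_ - 1)]
          have := half_le_sq_of_sqrt_half_le hx
          gcongr
          · linarith
          · exact capMass_le_of_high he hh hv hs hhs hx hxh hcomp hsx
      _ ≤ 2.581 := lpFunction_neg_add_lowCapWeight_le hhigh hx hxh hcomp

theorem sum_lpFunction_neg_le {e : V} {v : ι → V} {s : Finset ι} (he : ‖e‖ = 1)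
    (hv : IsKissing v) (hs : ∀ i ∈ s, √(1 / 2) ≤ ⟪v i, e⟫_ℝ) :
    ∑ i ∈ s, lpFunction (-⟪v i, e⟫_ℝ) ≤ 2.581 := by
  by_cases hhigh : ∃ k ∈ s, 3 / 4 < ⟪v k, e⟫_ℝ ^ 2
  · obtain ⟨k, hk, hhigh⟩ := hhigh
    rw [← Finset.add_sum_erase s _ hk]
    exact sum_lpFunction_neg_le_of_high he (hv.1 k) hv
      (fun i hi => hs i (Finset.mem_of_mem_erase hi))
      (fun i hi => hv.2 (Finset.ne_of_mem_erase hi).symm) (hs k hk) hhigh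
  · push Not at hhigh
    have hsq : √(3 / 4 : ℝ) ^ 2 = 3 / 4 := Real.sq_sqrt (by norm_num)
    have := sum_lpFunction_neg_le_mul_capMass hs (hsq.symm ▸ hhigh) hsq.le
    rw [hsq] at this
    linarith [capMass_le_one he hv hs]

theorem sum_erase_lpFunction_le [Fintype ι] {v : ι → V} (hv : IsKissing v) (i : ι) :
    ∑ j ∈ Finset.univ.erase i, lpFunction ⟪v i, v j⟫_ℝ ≤ 2.581 := by
  have hneg (j : ι) : ⟪v j, -v i⟫_ℝ = -⟪v i, v j⟫_ℝ := by rw [inner_neg_right, real_inner_comm]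
  rw [← Finset.sum_filter_add_sum_filter_not _ fun j => √(1 / 2) ≤ ⟪v j, -v i⟫_ℝ]
  have hnear := sum_lpFunction_neg_le (e := -v i) (by rw [norm_neg, hv.1]) hv
    (s := (Finset.univ.erase i).filter fun j => √(1 / 2) ≤ ⟪v j, -v i⟫_ℝ)
    fun j hj => (Finset.mem_filter.1 hj).2
  have hfar : ∑ j ∈ (Finset.univ.erase i).filter fun j => ¬ √(1 / 2) ≤ ⟪v j, -v i⟫_ℝ,
      lpFunction ⟪v i, v j⟫_ℝ ≤ 0 := by
    refine Finset.sum_nonpos fun j hj => ?_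
    obtain ⟨hji, hj⟩ := Finset.mem_filter.1 hj
    rw [hneg] at hj
    exact lpFunction_nonpos (by linarith [sqrt_half_lt])
      (hv.2 (Finset.ne_of_mem_erase hji).symm)
  simp only [hneg, neg_neg] at hnear hfar ⊢
  linarith

theorem IsKissing.card_le_twelve [Fintype ι] {v : ι → E3} (hv : IsKissing v) :
    Fintype.card ι ≤ 12 := by
  have hrow (i : ι) : ∑ j, lpFunction ⟪v i, v j⟫_ℝ ≤ 12.992 := by
    rw [← Finset.add_sum_erase _ _ (Finset.mem_univ i), real_inner_self_eq_norm_sq, hv.1, one_pow]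
    linarith [lpFunction_one_le, sum_erase_lpFunction_le hv i]
  have hsum : (Fintype.card ι : ℝ) ^ 2 ≤ Fintype.card ι * 12.992 := by
    refine (sq_card_le_sum_sum_lpFunction hv.1).trans ?_
    simpa using Finset.sum_le_sum fun i (_ : i ∈ Finset.univ) => hrow i
  by_contra! hcard
  have : (13 : ℝ) ≤ Fintype.card ι := by exact_mod_cast hcard
  nlinarith

end KissingNumber

section RotationAveraging

open MeasureTheory

variable {κ ι : Type*} [Fintype κ]

/-- The orthogonal group of a Euclidean space. -/
abbrev EuclideanOrthogonalGroup (κ : Type*) [Fintype κ] : Type _ :=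
  unitary (EuclideanSpace ℝ κ →L[ℝ] EuclideanSpace ℝ κ)

local notation "E" => EuclideanSpace ℝ κ
local notation "O" => EuclideanOrthogonalGroup κ

instance : ContinuousStar (E →L[ℝ] E) :=
  ⟨(ContinuousLinearMap.adjoint : (E →L[ℝ] E) ≃ₗᵢ⋆[ℝ] (E →L[ℝ] E)).continuous⟩

instance : CompactSpace O := by
  refine isCompact_iff_compactSpace.1 (Metric.isCompact_of_isClosed_isBounded isClosed_unitary ?_)
  refine isBounded_iff_forall_norm_le.2 ⟨1, fun g hg => ?_⟩
  refine ContinuousLinearMap.opNorm_le_bound _ zero_le_one fun x => ?_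
  rw [one_mul]
  exact (Unitary.norm_map ⟨g, hg⟩ x).le

instance : BorelSpace O := Subtype.borelSpace _

namespace EuclideanOrthogonalGroup

theorem exists_apply_eq_of_norm_eq {v w : E} (h : ‖v‖ = ‖w‖) : ∃ g : O, (g : E →L[ℝ] E) v = w :=
  ⟨Unitary.linearIsometryEquiv.symm (Submodule.span ℝ {v - w})ᗮ.reflection, by
    simpa using Submodule.reflection_sub h⟩

theorem inv_apply_apply (g : O) (q : E) :
    ((g⁻¹ : O) : E →L[ℝ] E) ((g : E →L[ℝ] E) q) = q := by
  have : ((g⁻¹ * g : O) : E →L[ℝ] E) q = q := by rw [inv_mul_cancel]; rfl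
  exact this

theorem continuous_inv_apply : Continuous fun p : O × E => ((p.1⁻¹ : O) : E →L[ℝ] E) p.2 :=
  (continuous_subtype_val.comp (continuous_inv.comp continuous_fst)).clm_apply continuous_snd

end EuclideanOrthogonalGroup

open EuclideanOrthogonalGroup

/-- The Haar measure of the set of orthogonal maps whose image of `C` contains `q`. -/
def hitMeasure (C : Set E) (q : E) : ENNReal :=
  Measure.haar {g : O | ((g⁻¹ : O) : E →L[ℝ] E) q ∈ C}

theorem measurableSet_setOf_inv_apply_mem {C : Set E} (hC : MeasurableSet C) (q : E) :
    MeasurableSet {g : O | ((g⁻¹ : O) : E →L[ℝ] E) q ∈ C} :=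
  (continuous_inv_apply.comp (Continuous.prodMk_left q)).measurable hC

theorem hitMeasure_eq_of_norm_eq (C : Set E) {q q' : E} (hq : ‖q‖ = ‖q'‖) :
    hitMeasure C q = hitMeasure C q' := by
  obtain ⟨h, rfl⟩ := exists_apply_eq_of_norm_eq hq
  have htranslate : {g : O | ((g⁻¹ : O) : E →L[ℝ] E) q ∈ C} = (fun g => h * g) ⁻¹'
      {g : O | ((g⁻¹ : O) : E →L[ℝ] E) ((h : E →L[ℝ] E) q) ∈ C} := by
    ext g
    have : ((g⁻¹ * h⁻¹ : O) : E →L[ℝ] E) ((h : E →L[ℝ] E) q) = ((g⁻¹ : O) : E →L[ℝ] E) q :=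
      congrArg ((g⁻¹ : O) : E →L[ℝ] E) (inv_apply_apply h q)
    simp only [Set.mem_preimage, Set.mem_ofPred_eq, mul_inv_rev, this]
  rw [hitMeasure, htranslate, measure_preimage_mul, hitMeasure]

theorem hitMeasure_smul {C : Set E} (hC : ∀ r : ℝ, 0 < r → ∀ q ∈ C, r • q ∈ C) {r : ℝ}
    (hr : 0 < r) (q : E) : hitMeasure C (r • q) = hitMeasure C q := by
  refine congrArg Measure.haar (Set.ext fun g => ?_)
  simp only [Set.mem_ofPred_eq, map_smul]
  exact ⟨fun h => by simpa [smul_smul, hr.ne'] using hC r⁻¹ (inv_pos.2 hr) _ h, hC r hr _⟩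

theorem hitMeasure_eq {C : Set E} (hC : ∀ r : ℝ, 0 < r → ∀ q ∈ C, r • q ∈ C) {q q' : E}
    (hq : q ≠ 0) (hq' : q' ≠ 0) : hitMeasure C q = hitMeasure C q' := by
  have hunit {p : E} (hp : p ≠ 0) : ‖‖p‖⁻¹ • p‖ = 1 := norm_smul_inv_norm hp
  rw [← hitMeasure_smul hC (inv_pos.2 (norm_pos_iff.2 hq)),
    ← hitMeasure_smul hC (inv_pos.2 (norm_pos_iff.2 hq')) q',
    hitMeasure_eq_of_norm_eq C ((hunit hq).trans (hunit hq').symm)]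

theorem sum_hitMeasure_le [Fintype ι] {C : Set E} (hC : MeasurableSet C) {v : ι → E} {d : ℕ}
    (hd : ∀ g : E ≃ₗᵢ[ℝ] E, (Finset.univ.filter fun i => g (v i) ∈ C).card ≤ d) :
    ∑ i, hitMeasure C (v i) ≤ d * (Measure.haar : Measure O) Set.univ := by
  have hint (i : ι) : hitMeasure C (v i) = ∫⁻ g : O,
      {g : O | ((g⁻¹ : O) : E →L[ℝ] E) (v i) ∈ C}.indicator 1 g ∂Measure.haar :=
    (lintegral_indicator_one (measurableSet_setOf_inv_apply_mem hC _)).symm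
  rw [Finset.sum_congr rfl fun i _ => hint i, ← lintegral_finsetSum _ fun i _ =>
    measurable_one.indicator (measurableSet_setOf_inv_apply_mem hC _), ← lintegral_const]
  refine lintegral_mono fun g => ?_
  simp only [Set.indicator_apply, Set.mem_ofPred_eq, Pi.one_apply]
  rw [Finset.sum_boole]
  exact_mod_cast hd (Unitary.linearIsometryEquiv g⁻¹)

theorem setLIntegral_hitMeasure {C S : Set E} (hC : MeasurableSet C) (hS : MeasurableSet S)
    (hSrot : ∀ q q', ‖q‖ = ‖q'‖ → q ∈ S → q' ∈ S) :
    ∫⁻ q in S, hitMeasure C q = volume (C ∩ S) * (Measure.haar : Measure O) Set.univ := by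
  set A : Set (O × E) := (fun p => ((p.1⁻¹ : O) : E →L[ℝ] E) p.2) ⁻¹' (C ∩ S)
  have hA_meas : MeasurableSet A := continuous_inv_apply.measurable (hC.inter hS)
  have hnorm (g : O) (q : E) : ‖(g : E →L[ℝ] E) q‖ = ‖q‖ := Unitary.norm_map g q
  have hleft : (Measure.haar.prod volume) A = ∫⁻ q in S, hitMeasure C q := by
    rw [Measure.prod_apply_symm hA_meas, ← lintegral_indicator hS]
    refine lintegral_congr fun q => ?_
    by_cases hq : q ∈ S
    · rw [Set.indicator_of_mem hq, hitMeasure]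
      refine congrArg _ (Set.ext fun g => and_iff_left ?_)
      exact hSrot _ _ (hnorm g⁻¹ q).symm hq
    · rw [Set.indicator_of_notMem hq]
      refine measure_mono_null ?_ measure_empty
      rintro g ⟨-, hg⟩
      exact hq (hSrot _ _ (hnorm g⁻¹ q) hg)
  have hright : (Measure.haar.prod volume) A
      = volume (C ∩ S) * (Measure.haar : Measure O) Set.univ := by
    rw [Measure.prod_apply hA_meas, ← lintegral_const]
    refine lintegral_congr fun g => ?_
    exact (Unitary.linearIsometryEquiv g⁻¹).measurePreserving.measure_preimage
      (hC.inter hS).nullMeasurableSet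
  rw [← hleft, hright]

theorem card_mul_volume_inter_le [Fintype ι] {C S : Set E} (hC : MeasurableSet C)
    (hcone : ∀ r : ℝ, 0 < r → ∀ q ∈ C, r • q ∈ C) (hS : MeasurableSet S) (hS₀ : 0 ∉ S)
    (hSrot : ∀ q q', ‖q‖ = ‖q'‖ → q ∈ S → q' ∈ S) {v : ι → E} (hv : ∀ i, v i ≠ 0) {d : ℕ}
    (hd : ∀ g : E ≃ₗᵢ[ℝ] E, (Finset.univ.filter fun i => g (v i) ∈ C).card ≤ d) :
    Fintype.card ι * volume (C ∩ S) ≤ d * volume S := by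
  have hpos : (Measure.haar : Measure O) Set.univ ≠ 0 := NeZero.ne _
  rw [← ENNReal.mul_le_mul_iff_left hpos (measure_ne_top _ _)]
  calc Fintype.card ι * volume (C ∩ S) * (Measure.haar : Measure O) Set.univ
      = ∑ _i : ι, ∫⁻ q in S, hitMeasure C q := by
        rw [setLIntegral_hitMeasure hC hS hSrot, Finset.sum_const, Finset.card_univ,
          nsmul_eq_mul, mul_assoc]
    _ = ∑ i, hitMeasure C (v i) * volume S := by
        refine Finset.sum_congr rfl fun i _ => ?_
        rw [← setLIntegral_const]
        exact setLIntegral_congr_fun hS fun q hq =>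
          hitMeasure_eq hcone (ne_of_mem_of_not_mem hq hS₀) (hv i)
    _ ≤ d * (Measure.haar : Measure O) Set.univ * volume S := by
        rw [← Finset.sum_mul]
        gcongr
        exact sum_hitMeasure_le hC hd
    _ = d * volume S * (Measure.haar : Measure O) Set.univ := mul_right_comm _ _ _

end RotationAveraging

section VolumeGrowth

open MeasureTheory
open scoped Pointwise ENNReal

theorem volume_add_two_mul_le_volume_add_Icc {S : Set ℝ} (hS : IsCompact S) (hne : S.Nonempty)
    {a : ℝ} (ha : 0 ≤ a) :
    volume S + ENNReal.ofReal (2 * a) ≤ volume (S + Set.Icc (-a) a) := by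
  have hMem := hS.sSup_mem hne
  have hmem := hS.sInf_mem hne
  have hle : ∀ x ∈ S, x ≤ sSup S := fun x hx => le_csSup hS.bddAbove hx
  have hge : ∀ x ∈ S, sInf S ≤ x := fun x hx => csInf_le hS.bddBelow hx
  have hsub : S ∪ (Set.Ioc (sSup S) (sSup S + a) ∪ Set.Ico (sInf S - a) (sInf S))
      ⊆ S + Set.Icc (-a) a := by
    rintro u (hu | hu | hu)
    · exact ⟨u, hu, 0, ⟨by linarith, ha⟩, add_zero u⟩
    · exact ⟨_, hMem, u - sSup S, ⟨by linarith [hu.1], by linarith [hu.2]⟩, add_sub_cancel _ _⟩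
    · exact ⟨_, hmem, u - sInf S, ⟨by linarith [hu.1], by linarith [hu.2]⟩, add_sub_cancel _ _⟩
  have hdisj₁ : Disjoint S (Set.Ioc (sSup S) (sSup S + a) ∪ Set.Ico (sInf S - a) (sInf S)) :=
    Set.disjoint_left.2 fun u hu hu' => hu'.elim (fun h => (hle u hu).not_gt h.1)
      fun h => (hge u hu).not_gt h.2
  have hdisj₂ : Disjoint (Set.Ioc (sSup S) (sSup S + a)) (Set.Ico (sInf S - a) (sInf S)) :=
    Set.disjoint_left.2 fun u hu hu' => (hge _ hMem).not_gt (hu.1.trans hu'.2)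
  refine le_trans (le_of_eq ?_) (measure_mono hsub)
  rw [measure_union hdisj₁ (measurableSet_Ioc.union measurableSet_Ico),
    measure_union hdisj₂ measurableSet_Ico, Real.volume_Ioc, Real.volume_Ico, add_sub_cancel_left,
    sub_sub_cancel, ← ENNReal.ofReal_add ha ha, two_mul]

theorem volume_add_mul_snd_image_le {β : Type*} [AddMonoid β] [TopologicalSpace β]
    [ContinuousAdd β] [T2Space β] [SecondCountableTopology β] [MeasurableSpace β] [BorelSpace β]
    (ν : Measure β) [SFinite ν] {K : Set (ℝ × β)}
    (hK : IsCompact K) {a : ℝ} (ha : 0 ≤ a) :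
    (volume.prod ν) K + ENNReal.ofReal (2 * a) * ν (Prod.snd '' K)
      ≤ (volume.prod ν) (K + Set.Icc (-a) a ×ˢ {0}) := by
  have hA : MeasurableSet (Prod.snd '' K) := (hK.image continuous_snd).measurableSet
  calc (volume.prod ν) K + ENNReal.ofReal (2 * a) * ν (Prod.snd '' K)
      = ∫⁻ p, volume ((fun x : ℝ => (x, p)) ⁻¹' K)
          + (Prod.snd '' K).indicator (fun _ => ENNReal.ofReal (2 * a)) p ∂ν := by
        rw [lintegral_add_right _ (measurable_const.indicator hA), lintegral_indicator hA,
          setLIntegral_const, Measure.prod_apply_symm hK.measurableSet]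
    _ ≤ ∫⁻ p, volume ((fun x : ℝ => (x, p)) ⁻¹' (K + Set.Icc (-a) a ×ˢ {0})) ∂ν := by
        refine lintegral_mono fun p => ?_
        by_cases hp : p ∈ Prod.snd '' K
        · rw [Set.indicator_of_mem hp]
          have hS : IsCompact ((fun x : ℝ => (x, p)) ⁻¹' K) :=
            (hK.image continuous_fst).of_isClosed_subset
              (hK.isClosed.preimage (Continuous.prodMk_left p)) fun x hx => ⟨(x, p), hx, rfl⟩
          have hne : ((fun x : ℝ => (x, p)) ⁻¹' K).Nonempty := by
            obtain ⟨⟨x, q⟩, hq, rfl⟩ := hp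
            exact ⟨x, hq⟩
          refine (volume_add_two_mul_le_volume_add_Icc hS hne ha).trans (measure_mono ?_)
          rintro _ ⟨x, hx, t, ht, rfl⟩
          exact ⟨(x, p), hx, (t, 0), ⟨ht, rfl⟩, by simp⟩
        · rw [Set.indicator_of_notMem hp, add_zero]
          refine measure_mono (Set.preimage_mono fun q hq => ?_)
          exact ⟨q, hq, (0, 0), ⟨⟨neg_nonpos.2 ha, ha⟩, rfl⟩, add_zero q⟩
    _ = (volume.prod ν) (K + Set.Icc (-a) a ×ˢ {0}) :=
        (Measure.prod_apply_symm
          (hK.add (isCompact_Icc.prod isCompact_singleton)).measurableSet).symm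

/-- The segment of length `2 a` centred at the origin in the `i`-th coordinate direction. -/
def coordSegment {n : ℕ} (a : ℝ) (i : Fin n) : Set (Fin n → ℝ) := Pi.single i '' Set.Icc (-a) a

/-- The orthogonal projection of `K` to the `i`-th coordinate hyperplane. -/
def shadow {n : ℕ} (i : Fin (n + 1)) (K : Set (Fin (n + 1) → ℝ)) : Set (Fin n → ℝ) :=
  i.removeNth '' K

theorem isCompact_coordSegment {n : ℕ} (a : ℝ) (i : Fin n) : IsCompact (coordSegment a i) :=
  isCompact_Icc.image (continuous_single (A := fun _ => ℝ) i)

theorem zero_mem_coordSegment {n : ℕ} {a : ℝ} (ha : 0 ≤ a) (i : Fin n) : 0 ∈ coordSegment a i :=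
  ⟨0, ⟨neg_nonpos.2 ha, ha⟩, Pi.single_zero i⟩

theorem isCompact_shadow {n : ℕ} {K : Set (Fin (n + 1) → ℝ)} (hK : IsCompact K)
    (i : Fin (n + 1)) : IsCompact (shadow i K) :=
  hK.image (continuous_pi fun _ => continuous_apply _)

theorem volume_add_mul_volume_shadow_le {n : ℕ} {K : Set (Fin (n + 1) → ℝ)} (hK : IsCompact K)
    {a : ℝ} (ha : 0 ≤ a) (i : Fin (n + 1)) :
    volume K + ENNReal.ofReal (2 * a) * volume (shadow i K) ≤ volume (K + coordSegment a i) := by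
  let e := MeasurableEquiv.piFinSuccAbove (fun _ : Fin (n + 1) => ℝ) i
  have he : MeasurePreserving e volume (volume.prod volume) :=
    volume_preserving_piFinSuccAbove (fun _ => ℝ) i
  have hvol (L : Set (Fin (n + 1) → ℝ)) : volume L = (volume.prod volume) (e '' L) := by
    rw [e.image_eq_preimage_symm, he.symm.measure_preimage_equiv]
  have he_apply (x : Fin (n + 1) → ℝ) : e x = (x i, i.removeNth x) := rfl
  have he_cont : Continuous e :=
    (continuous_apply i).prodMk (continuous_pi fun _ => continuous_apply _)
  have hshadow : shadow i K = Prod.snd '' (e '' K) := by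
    rw [Set.image_image]
    rfl
  have hseg : e '' K + Set.Icc (-a) a ×ˢ {0} ⊆ e '' (K + coordSegment a i) := by
    rintro _ ⟨_, ⟨x, hx, rfl⟩, ⟨t, u⟩, ⟨ht, rfl⟩, rfl⟩
    refine ⟨x + Pi.single i t, ⟨x, hx, _, ⟨t, ht, rfl⟩, rfl⟩, Prod.ext ?_ (funext fun j => ?_)⟩
    · simp [he_apply]
    · simp [he_apply, Fin.removeNth]
  rw [hvol K, hvol (K + _), hshadow]
  exact (volume_add_mul_snd_image_le volume (hK.image he_cont) ha).trans (measure_mono hseg)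

theorem volume_add_sum_mul_volume_shadow_le {n : ℕ} {K : Set (Fin (n + 1) → ℝ)}
    (hK : IsCompact K) {a : ℝ} (ha : 0 ≤ a) (s : Finset (Fin (n + 1))) :
    volume K + ENNReal.ofReal (2 * a) * ∑ i ∈ s, volume (shadow i K)
      ≤ volume (K + ∑ i ∈ s, coordSegment a i) := by
  have hseg_compact (t : Finset (Fin (n + 1))) : IsCompact (∑ i ∈ t, coordSegment a i) :=
    Finset.sum_induction _ IsCompact (fun _ _ => IsCompact.add) isCompact_singleton
      fun i _ => isCompact_coordSegment a i
  have hsubset (t : Finset (Fin (n + 1))) : K ⊆ K + ∑ i ∈ t, coordSegment a i :=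
    Set.subset_add_left K (Finset.sum_induction _ (fun S => (0 : Fin (n + 1) → ℝ) ∈ S)
      (fun S T hS hT => ⟨0, hS, 0, hT, add_zero 0⟩) rfl fun i _ => zero_mem_coordSegment ha i)
  induction s using Finset.induction_on with
  | empty => simp
  | insert i s hi ih =>
    rw [Finset.sum_insert hi, Finset.sum_insert hi, mul_add, add_comm (coordSegment a i),
      ← add_assoc K, add_left_comm, add_comm]
    refine le_trans ?_ (volume_add_mul_volume_shadow_le (hK.add (hseg_compact s)) ha i)
    gcongr
    exact Set.image_mono (hsubset s)

theorem add_sum_coordSegment_subset_cthickening {n : ℕ} (K : Set (Fin n → ℝ)) {a : ℝ}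
    (ha : 0 ≤ a) : K + ∑ i, coordSegment a i ⊆ Metric.cthickening a K := by
  rintro _ ⟨p, hp, t, ht, rfl⟩
  obtain ⟨f, hf, rfl⟩ := (Set.mem_finsetSum _ _ _).1 ht
  choose c hc hcf using fun i => hf (Finset.mem_univ i)
  refine Metric.mem_cthickening_of_dist_le _ p a K hp ?_
  rw [dist_eq_norm, add_sub_cancel_left, pi_norm_le_iff_of_nonneg ha]
  intro j
  simp only [← hcf, Finset.univ_sum_single, Real.norm_eq_abs]
  exact abs_le.2 (hc j)

theorem sq_lintegral_mul_le {α : Type*} [MeasurableSpace α] (μ : Measure α) {f g : α → ℝ≥0∞}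
    (hf : AEMeasurable f μ) (hg : AEMeasurable g μ) :
    (∫⁻ x, f x * g x ∂μ) ^ 2 ≤ (∫⁻ x, f x ^ 2 ∂μ) * ∫⁻ x, g x ^ 2 ∂μ := by
  have h := pow_le_pow_left₀ zero_le
    (ENNReal.lintegral_mul_le_Lp_mul_Lq μ Real.HolderConjugate.two_two hf hg) 2
  simpa only [mul_pow, ← ENNReal.rpow_mul_natCast, Pi.mul_apply, Nat.cast_ofNat, ENNReal.rpow_ofNat,
    div_mul_cancel₀, ENNReal.rpow_one, one_div_mul_cancel, ne_eq, OfNat.ofNat_ne_zero,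
    not_false_eq_true] using h

theorem sq_lintegral_lintegral_lintegral_mul_le {α β γ : Type*} [MeasurableSpace α]
    [MeasurableSpace β] [MeasurableSpace γ] (μ : Measure α) (ν : Measure β) (ρ : Measure γ)
    [SFinite μ] [SFinite ν] [SFinite ρ] {f : β × γ → ℝ≥0∞} {g : α × γ → ℝ≥0∞} {h : α × β → ℝ≥0∞}
    (hf : Measurable f) (hg : Measurable g) (hh : Measurable h) :
    (∫⁻ x, ∫⁻ y, ∫⁻ z, h (x, y) * (g (x, z) * f (y, z)) ∂ρ ∂ν ∂μ) ^ 2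
      ≤ (∫⁻ p, f p ^ 2 ∂ν.prod ρ) * (∫⁻ p, g p ^ 2 ∂μ.prod ρ) * ∫⁻ p, h p ^ 2 ∂μ.prod ν := by
  let k (p : α × β) : ℝ≥0∞ := ∫⁻ z, g (p.1, z) * f (p.2, z) ∂ρ
  have hk : Measurable k :=
    Measurable.lintegral_prod_right' (f := fun w : (α × β) × γ => g (w.1.1, w.2) * f (w.1.2, w.2))
      (by fun_prop)
  have hk_sq (p : α × β) :
      k p ^ 2 ≤ (∫⁻ z, g (p.1, z) ^ 2 ∂ρ) * ∫⁻ z, f (p.2, z) ^ 2 ∂ρ :=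
    sq_lintegral_mul_le ρ (by fun_prop) (by fun_prop)
  calc (∫⁻ x, ∫⁻ y, ∫⁻ z, h (x, y) * (g (x, z) * f (y, z)) ∂ρ ∂ν ∂μ) ^ 2
      = (∫⁻ p, h p * k p ∂μ.prod ν) ^ 2 := by
        rw [lintegral_prod (fun p => h p * k p) (hh.mul hk).aemeasurable]
        congr! with x y
        exact lintegral_const_mul _ (by fun_prop)
    _ ≤ (∫⁻ p, h p ^ 2 ∂μ.prod ν) * ∫⁻ p, k p ^ 2 ∂μ.prod ν :=
        sq_lintegral_mul_le _ hh.aemeasurable hk.aemeasurable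
    _ ≤ (∫⁻ p, h p ^ 2 ∂μ.prod ν)
        * ∫⁻ p, (∫⁻ z, g (p.1, z) ^ 2 ∂ρ) * ∫⁻ z, f (p.2, z) ^ 2 ∂ρ ∂μ.prod ν := by
        gcongr with p
        exact hk_sq p
    _ = (∫⁻ p, f p ^ 2 ∂ν.prod ρ) * (∫⁻ p, g p ^ 2 ∂μ.prod ρ) * ∫⁻ p, h p ^ 2 ∂μ.prod ν := by
        rw [lintegral_prod_mul (f := fun x => ∫⁻ z, g (x, z) ^ 2 ∂ρ)
            (g := fun y => ∫⁻ z, f (y, z) ^ 2 ∂ρ) (by fun_prop) (by fun_prop),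
          lintegral_prod _ (hf.pow_const 2).aemeasurable,
          lintegral_prod _ (hg.pow_const 2).aemeasurable]
        ring

theorem lintegral_fin_three {f : (Fin 3 → ℝ) → ℝ≥0∞} (hf : Measurable f) :
    ∫⁻ x, f x = ∫⁻ x, ∫⁻ y, ∫⁻ z, f ![x, y, z] := by
  have hmp : MeasurePreserving fun p : ℝ × ℝ × ℝ => ![p.1, p.2.1, p.2.2] := by
    convert (volume_preserving_piFinSuccAbove (fun _ : Fin 3 => ℝ) 0).symm.comp
      ((MeasurePreserving.id volume).prod (volume_preserving_finTwoArrow ℝ).symm) using 1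
    · ext p i
      fin_cases i <;> rfl
    · rfl
  have hf' : Measurable fun p : ℝ × ℝ × ℝ => f ![p.1, p.2.1, p.2.2] :=
    hf.comp hmp.measurable
  calc ∫⁻ x, f x = ∫⁻ p : ℝ × ℝ × ℝ, f ![p.1, p.2.1, p.2.2] := (hmp.lintegral_comp hf).symm
    _ = ∫⁻ x, ∫⁻ q : ℝ × ℝ, f ![x, q.1, q.2] := lintegral_prod _ hf'.aemeasurable
    _ = ∫⁻ x, ∫⁻ y, ∫⁻ z, f ![x, y, z] := lintegral_congr fun x =>
        lintegral_prod _ (hf'.comp measurable_prodMk_left).aemeasurable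

/-- The Loomis–Whitney inequality in dimension three. -/
theorem sq_volume_le_prod_volume_shadow {K : Set (Fin 3 → ℝ)} (hK : IsCompact K) :
    volume K ^ 2 ≤ ∏ i, volume (shadow i K) := by
  have hmeas (i : Fin 3) : MeasurableSet (shadow i K) := (isCompact_shadow hK i).measurableSet
  let w (i : Fin 3) (p : ℝ × ℝ) : ℝ≥0∞ := (shadow i K).indicator 1 ![p.1, p.2]
  have hw (i : Fin 3) : Measurable (w i) :=
    (measurable_one.indicator (hmeas i)).comp MeasurableEquiv.finTwoArrow.symm.measurable
  have hw_sq (i : Fin 3) : ∫⁻ p, w i p ^ 2 = volume (shadow i K) := by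
    have h (u : Fin 2 → ℝ) :
        (shadow i K).indicator (1 : (Fin 2 → ℝ) → ℝ≥0∞) u ^ 2 = (shadow i K).indicator 1 u := by
      by_cases hu : u ∈ shadow i K <;> simp [hu]
    simp only [w, h]
    rw [← lintegral_indicator_one (hmeas i)]
    exact (volume_preserving_finTwoArrow ℝ).symm.lintegral_comp
      (measurable_one.indicator (hmeas i))
  have hK_le : volume K ≤ ∫⁻ x, ∫⁻ y, ∫⁻ z, w 2 (x, y) * (w 1 (x, z) * w 0 (y, z)) := by
    rw [← lintegral_indicator_one hK.measurableSet,
      lintegral_fin_three (measurable_one.indicator hK.measurableSet)]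
    refine lintegral_mono fun x => lintegral_mono fun y => lintegral_mono fun z => ?_
    refine Set.indicator_apply_le' (fun hxyz => ?_) fun _ => zero_le
    have h₀ : ![y, z] ∈ shadow 0 K := ⟨_, hxyz, rfl⟩
    have h₁ : ![x, z] ∈ shadow 1 K := ⟨_, hxyz, by ext j; fin_cases j <;> rfl⟩
    have h₂ : ![x, y] ∈ shadow 2 K := ⟨_, hxyz, by ext j; fin_cases j <;> rfl⟩
    simp [w, h₀, h₁, h₂]
  calc volume K ^ 2
      ≤ (∫⁻ x, ∫⁻ y, ∫⁻ z, w 2 (x, y) * (w 1 (x, z) * w 0 (y, z))) ^ 2 := by gcongr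
    _ ≤ (∫⁻ p, w 0 p ^ 2) * (∫⁻ p, w 1 p ^ 2) * ∫⁻ p, w 2 p ^ 2 :=
        sq_lintegral_lintegral_lintegral_mul_le _ _ _ (hw 0) (hw 1) (hw 2)
    _ = ∏ i, volume (shadow i K) := by
        simp only [hw_sq]
        exact (Fin.prod_univ_three fun i => volume (shadow i K)).symm

theorem three_mul_rpow_two_thirds_le_add {v a b c : ℝ} (hv : 0 ≤ v) (ha : 0 ≤ a) (hb : 0 ≤ b)
    (hc : 0 ≤ c) (h : v ^ 2 ≤ a * b * c) : 3 * v ^ (2 / 3 : ℝ) ≤ a + b + c := by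
  have hpow : v ^ (2 / 3 : ℝ) ≤ a ^ (1 / 3 : ℝ) * b ^ (1 / 3 : ℝ) * c ^ (1 / 3 : ℝ) := by
    calc v ^ (2 / 3 : ℝ) = (v ^ 2) ^ (1 / 3 : ℝ) := by
          rw [← Real.rpow_natCast_mul hv]
          norm_num
      _ ≤ (a * b * c) ^ (1 / 3 : ℝ) := by gcongr
      _ = _ := by rw [Real.mul_rpow (mul_nonneg ha hb) hc, Real.mul_rpow ha hb]
  have hamgm := Real.geom_mean_le_arith_mean3_weighted (w₁ := 1 / 3) (w₂ := 1 / 3) (w₃ := 1 / 3)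
    (by norm_num) (by norm_num) (by norm_num) ha hb hc (by norm_num)
  linarith

theorem volume_real_add_le_volume_real_cthickening_pi {K : Set (Fin 3 → ℝ)} (hK : IsCompact K)
    {a : ℝ} (ha : 0 ≤ a) :
    volume.real K + 6 * a * volume.real K ^ (2 / 3 : ℝ)
      ≤ volume.real (Metric.cthickening a K) := by
  have hK_fin := hK.measure_lt_top (μ := volume)
  have hshadow_fin : ∀ i ∈ Finset.univ, volume (shadow i K) ≠ ∞ := fun i _ =>
    (isCompact_shadow hK i).measure_lt_top.ne
  have hsum_fin : ∑ i, volume (shadow i K) ≠ ∞ := ENNReal.sum_ne_top.2 hshadow_fin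
  have hgrowth : volume.real K + 2 * a * ∑ i, volume.real (shadow i K)
      ≤ volume.real (Metric.cthickening a K) := by
    have h := ENNReal.toReal_mono (hK.cthickening).measure_lt_top.ne
      ((volume_add_sum_mul_volume_shadow_le hK ha Finset.univ).trans
        (measure_mono (add_sum_coordSegment_subset_cthickening K ha)))
    rwa [ENNReal.toReal_add (by finiteness) (by finiteness), ENNReal.toReal_mul,
      ENNReal.toReal_ofReal (by positivity), ENNReal.toReal_sum hshadow_fin] at h
  have hLW : volume.real K ^ 2
      ≤ volume.real (shadow 0 K) * volume.real (shadow 1 K) * volume.real (shadow 2 K) := by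
    have h := ENNReal.toReal_mono (ENNReal.prod_ne_top hshadow_fin)
      (sq_volume_le_prod_volume_shadow hK)
    rwa [ENNReal.toReal_pow, ENNReal.toReal_prod, Fin.prod_univ_three] at h
  have hamgm := three_mul_rpow_two_thirds_le_add measureReal_nonneg measureReal_nonneg
    measureReal_nonneg measureReal_nonneg hLW
  rw [Fin.sum_univ_three] at hgrowth
  nlinarith [mul_le_mul_of_nonneg_left hamgm ha]

theorem volume_real_add_le_volume_real_cthickening {K : Set (EuclideanSpace ℝ (Fin 3))}
    (hK : IsCompact K) {δ : ℝ} (hδ : 0 ≤ δ) :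
    volume.real K + 2 * √3 * δ * volume.real K ^ (2 / 3 : ℝ)
      ≤ volume.real (Metric.cthickening δ K) := by
  have hL : IsCompact (WithLp.toLp 2 ⁻¹' K : Set (Fin 3 → ℝ)) :=
    (EuclideanSpace.equiv (Fin 3) ℝ).symm.toHomeomorph.isCompact_preimage.2 hK
  have hvol {S : Set (EuclideanSpace ℝ (Fin 3))} (hS : IsCompact S) :
      volume (WithLp.toLp 2 ⁻¹' S : Set (Fin 3 → ℝ)) = volume S :=
    (PiLp.volume_preserving_toLp (Fin 3)).measure_preimage hS.measurableSet.nullMeasurableSet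
  have hsub : Metric.cthickening (δ / √3) (WithLp.toLp 2 ⁻¹' K : Set (Fin 3 → ℝ))
      ⊆ WithLp.toLp 2 ⁻¹' Metric.cthickening δ K := by
    rw [hL.cthickening_eq_biUnion_closedBall (by positivity)]
    refine Set.iUnion₂_subset fun y hy x hx => ?_
    refine Metric.mem_cthickening_of_dist_le _ _ _ _ hy ?_
    have hlip := (PiLp.lipschitzWith_toLp 2 fun _ : Fin 3 => ℝ).dist_le_mul x y
    calc dist (WithLp.toLp 2 x) (WithLp.toLp 2 y) ≤ √3 * dist x y := by
          simpa [Real.sqrt_eq_rpow] using hlip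
      _ ≤ √3 * (δ / √3) := by gcongr; exact hx
      _ = δ := mul_div_cancel₀ δ (by positivity)
  calc volume.real K + 2 * √3 * δ * volume.real K ^ (2 / 3 : ℝ)
      = volume.real K + 6 * (δ / √3) * volume.real K ^ (2 / 3 : ℝ) := by
        congr 2
        field_simp
        rw [Real.sq_sqrt zero_le_three]
        ring
    _ ≤ volume.real (Metric.cthickening (δ / √3) (WithLp.toLp 2 ⁻¹' K : Set (Fin 3 → ℝ))) := by
        simpa only [measureReal_def, hvol hK]
          using volume_real_add_le_volume_real_cthickening_pi hL (a := δ / √3) (by positivity)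
    _ ≤ volume.real (Metric.cthickening δ K) :=
        ENNReal.toReal_mono hK.cthickening.measure_lt_top.ne
          ((measure_mono hsub).trans_eq (hvol hK.cthickening))

end VolumeGrowth

section Cuboctahedron

/-- The vertices of the cuboctahedron of circumradius `√2`, in integer coordinates. -/
def cuboctahedronCoord : Fin 12 → Fin 3 → ℤ :=
  ![![1, 1, 0], ![1, -1, 0], ![-1, 1, 0], ![-1, -1, 0],
    ![1, 0, 1], ![1, 0, -1], ![-1, 0, 1], ![-1, 0, -1],
    ![0, 1, 1], ![0, 1, -1], ![0, -1, 1], ![0, -1, -1]]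

/-- The vertices of the cuboctahedron inscribed in the unit sphere. -/
def cuboctahedronVertex (k : Fin 12) : E3 :=
  (√2)⁻¹ • WithLp.toLp 2 fun i => (cuboctahedronCoord k i : ℝ)

theorem inner_cuboctahedronVertex (j k : Fin 12) :
    ⟪cuboctahedronVertex j, cuboctahedronVertex k⟫_ℝ
      = (cuboctahedronCoord j ⬝ᵥ cuboctahedronCoord k : ℤ) / 2 := by
  have hsqrt : (√2)⁻¹ * (√2)⁻¹ = (2 : ℝ)⁻¹ := by
    rw [← mul_inv, Real.mul_self_sqrt zero_le_two]
  rw [cuboctahedronVertex, cuboctahedronVertex, real_inner_smul_left, real_inner_smul_right,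
    ← mul_assoc, hsqrt]
  simp [PiLp.inner_apply, dotProduct, div_eq_inv_mul, mul_comm]

theorem isKissing_cuboctahedronVertex : IsKissing cuboctahedronVertex := by
  have hself : ∀ k, cuboctahedronCoord k ⬝ᵥ cuboctahedronCoord k = 2 := by decide
  have hle : ∀ j k, j ≠ k → cuboctahedronCoord j ⬝ᵥ cuboctahedronCoord k ≤ 1 := by decide
  refine ⟨fun k => ?_, fun j k hjk => ?_⟩
  · rw [← pow_eq_one_iff_of_nonneg (norm_nonneg _) two_ne_zero, ← real_inner_self_eq_norm_sq,
      inner_cuboctahedronVertex, hself]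
    norm_num
  · beta_reduce
    rw [inner_cuboctahedronVertex]
    gcongr
    exact_mod_cast hle j k hjk

end Cuboctahedron

section FreeCone

open MeasureTheory

/-- The centres of the balls of the packing `P` touching the ball centred at `x`. -/
def touching {X : Type*} [PseudoMetricSpace X] (P : Finset X) (x : X) : Finset X :=
  P.filter fun y => dist x y = 2

theorem norm_sub_of_mem_touching {X : Type*} [SeminormedAddCommGroup X] {P : Finset X} {x y : X}
    (hy : y ∈ touching P x) : ‖y - x‖ = 2 := by
  rw [← dist_eq_norm, dist_comm]
  exact (Finset.mem_filter.1 hy).2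

variable {V ι ι' : Type*} [NormedAddCommGroup V] [InnerProductSpace ℝ V]

theorem IsKissing.comp_injective {v : ι → V} (hv : IsKissing v) {f : ι' → ι}
    (hf : Function.Injective f) : IsKissing (v ∘ f) :=
  ⟨fun i => hv.1 (f i), hv.2.comp_of_injective hf⟩

theorem IsKissing.map {v : ι → V} (hv : IsKissing v) (g : V ≃ₗᵢ[ℝ] V) : IsKissing (g ∘ v) :=
  ⟨fun i => (g.norm_map _).trans (hv.1 i), fun _ _ hij => (g.inner_map_map _ _).trans_le (hv.2 hij)⟩

theorem IsKissing.sumElim {v : ι → V} {w : ι' → V} (hv : IsKissing v) (hw : IsKissing w)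
    (hvw : ∀ i j, ⟪v i, w j⟫_ℝ ≤ 1 / 2) : IsKissing (Sum.elim v w) := by
  refine ⟨Sum.rec hv.1 hw.1, ?_⟩
  rintro (i | i) (j | j) hij
  · exact hv.2 fun h => hij (congrArg _ h)
  · exact hvw i j
  · exact (real_inner_comm _ _).trans_le (hvw j i)
  · exact hw.2 fun h => hij (congrArg _ h)

/-- The directions making an angle at least `π / 3` with the directions from `x` to all the centres
touching it. -/
def freeCone (P : Finset V) (x : V) : Set V := {q | ∀ y ∈ touching P x, ⟪q, y - x⟫_ℝ ≤ ‖q‖}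

theorem isClosed_freeCone (P : Finset V) (x : V) : IsClosed (freeCone P x) := by
  have h : freeCone P x = ⋂ y ∈ touching P x, {q | ⟪q, y - x⟫_ℝ ≤ ‖q‖} := by
    ext q
    simp [freeCone]
  rw [h]
  exact isClosed_biInter fun y _ => isClosed_le (by fun_prop) continuous_norm

theorem smul_mem_freeCone {P : Finset V} {x q : V} {r : ℝ} (hr : 0 < r) (hq : q ∈ freeCone P x) :
    r • q ∈ freeCone P x := fun y hy => by
  rw [real_inner_smul_left, norm_smul_of_nonneg hr.le]
  exact mul_le_mul_of_nonneg_left (hq y hy) hr.le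

theorem isKissing_touching {P : Finset V} (hP : ∀ x ∈ P, ∀ y ∈ P, x ≠ y → 2 ≤ dist x y) (x : V) :
    IsKissing fun y : touching P x => (1 / 2 : ℝ) • (y.1 - x) := by
  have hnorm (y : touching P x) : ‖y.1 - x‖ = 2 := norm_sub_of_mem_touching y.2
  refine ⟨fun y => by rw [norm_smul, hnorm]; norm_num, fun y z hyz => ?_⟩
  have hdist : 2 ≤ ‖(y.1 - x) - (z.1 - x)‖ := by
    rw [sub_sub_sub_cancel_right, ← dist_eq_norm]
    exact hP y (Finset.mem_of_mem_filter _ y.2) z (Finset.mem_of_mem_filter _ z.2)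
      (Subtype.coe_ne_coe.2 hyz)
  have hexpand := norm_sub_sq_real (y.1 - x) (z.1 - x)
  rw [hnorm, hnorm] at hexpand
  beta_reduce
  rw [real_inner_smul_left, real_inner_smul_right]
  nlinarith

theorem card_touching_add_card_filter_mem_freeCone_le [Fintype ι] {P : Finset E3}
    (hP : ∀ x ∈ P, ∀ y ∈ P, x ≠ y → 2 ≤ dist x y) (x : E3) {v : ι → E3} (hv : IsKissing v) :
    (touching P x).card + (Finset.univ.filter fun i => v i ∈ freeCone P x).card ≤ 12 := by
  have hfree : IsKissing fun i : {i // v i ∈ freeCone P x} => v i :=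
    hv.comp_injective Subtype.val_injective
  have hunion := (isKissing_touching hP x).sumElim hfree fun y i => by
    have h := i.2 y y.2
    rw [hv.1, real_inner_comm] at h
    rw [real_inner_smul_left]
    linarith
  simpa only [Fintype.card_sum, Fintype.card_coe, Fintype.card_subtype] using hunion.card_le_twelve

/-- The spherical shell of inner radius `r` and outer radius `R` centred at the origin, without its
inner sphere. -/
def shell (r R : ℝ) : Set E3 := Metric.closedBall 0 R \ Metric.closedBall 0 r

theorem mem_shell {r R : ℝ} {q : E3} : q ∈ shell r R ↔ ‖q‖ ≤ R ∧ r < ‖q‖ := by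
  simp [shell]

theorem volume_shell_ne_top (r R : ℝ) : volume (shell r R) ≠ ⊤ :=
  ((measure_mono Set.sdiff_subset).trans_lt (isCompact_closedBall _ _).measure_lt_top).ne

theorem volume_real_closedBall (x : E3) {r : ℝ} (hr : 0 ≤ r) :
    volume.real (Metric.closedBall x r) = r ^ 3 * (Real.pi * 4 / 3) := by
  rw [measureReal_def, EuclideanSpace.volume_closedBall_fin_three, ENNReal.toReal_mul,
    ENNReal.toReal_pow, ENNReal.toReal_ofReal hr, ENNReal.toReal_ofReal (by positivity)]

theorem volume_real_shell {r R : ℝ} (hr : 0 ≤ r) (hrR : r ≤ R) :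
    volume.real (shell r R) = (R ^ 3 - r ^ 3) * (Real.pi * 4 / 3) := by
  rw [shell, measureReal_sdiff (Metric.closedBall_subset_closedBall hrR)
    Metric.isClosed_closedBall.measurableSet (isCompact_closedBall _ _).measure_lt_top.ne,
    volume_real_closedBall _ (hr.trans hrR), volume_real_closedBall _ hr, sub_mul]

theorem twelve_mul_volume_real_freeCone_inter_shell_le {P : Finset E3}
    (hP : ∀ x ∈ P, ∀ y ∈ P, x ≠ y → 2 ≤ dist x y) (x : E3) {r : ℝ} (hr : 0 ≤ r) (R : ℝ) :
    12 * volume.real (freeCone P x ∩ shell r R)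
      ≤ (12 - (touching P x).card) * volume.real (shell r R) := by
  have hcount (g : E3 ≃ₗᵢ[ℝ] E3) := card_touching_add_card_filter_mem_freeCone_le hP x
    (isKissing_cuboctahedronVertex.map g)
  have h := card_mul_volume_inter_le (isClosed_freeCone P x).measurableSet
    (fun _ hr _ => smul_mem_freeCone hr)
    (S := shell r R)
    (Metric.isClosed_closedBall.measurableSet.diff Metric.isClosed_closedBall.measurableSet)
    (fun h₀ => by simpa using (mem_shell.1 h₀).2.trans_le (norm_zero.trans_le hr))
    (fun q q' hqq' hq => by rwa [mem_shell, ← hqq', ← mem_shell])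
    (fun k => norm_ne_zero_iff.1 (by simp [isKissing_cuboctahedronVertex.1 k]))
    fun g => Nat.le_sub_of_add_le' (hcount g)
  have h' := ENNReal.toReal_mono
    (ENNReal.mul_ne_top (ENNReal.natCast_ne_top _) (volume_shell_ne_top r R)) h
  have hle : (touching P x).card ≤ 12 := (Nat.le_add_right _ _).trans (hcount (.refl ℝ E3))
  rwa [ENNReal.toReal_mul, ENNReal.toReal_mul, ENNReal.toReal_natCast, ENNReal.toReal_natCast,
    Nat.cast_sub hle, Fintype.card_fin] at h'

end FreeCone

section ContactNumber

open MeasureTheory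

theorem contactsOrdered_eq_sum_card_touching {d : ℕ} (P : Finset (EuclideanSpace ℝ (Fin d))) :
    contactsOrdered P = ∑ x ∈ P, (touching P x).card := by
  have h : (P.offDiag.filter fun p => dist p.1 p.2 = 2)
      = (P ×ˢ P).filter fun p => dist p.1 p.2 = 2 := by
    ext ⟨x, y⟩
    have hne (h : dist x y = 2) : x ≠ y := dist_pos.1 (h ▸ two_pos)
    simp only [Finset.mem_filter, Finset.mem_offDiag, Finset.mem_product]
    tauto
  simp only [contactsOrdered, h, touching, Finset.card_filter, Finset.sum_product]

theorem cthickening_coe_finset {X : Type*} [PseudoMetricSpace X] (P : Finset X) {r : ℝ}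
    (hr : 0 ≤ r) : Metric.cthickening r (P : Set X) = ⋃ x ∈ P, Metric.closedBall x r :=
  P.finite_toSet.isCompact.cthickening_eq_biUnion_closedBall hr

theorem isCompact_cthickening_coe_finset {X : Type*} [PseudoMetricSpace X] [ProperSpace X]
    (P : Finset X) (r : ℝ) : IsCompact (Metric.cthickening r (P : Set X)) :=
  P.finite_toSet.isCompact.cthickening

-- The nearest centre `x` to `q` is the one whose free cone contains `q - x`.
theorem cthickening_subset_union_freeCone (P : Finset E3) {R : ℝ} (hR : 0 ≤ R) :
    Metric.cthickening R (P : Set E3) ⊆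
      Metric.cthickening 2 (P : Set E3) ∪ ⋃ x ∈ P, (· - x) ⁻¹' (freeCone P x ∩ shell 2 R) := by
  intro q hqR
  by_cases hq₂ : q ∈ Metric.cthickening 2 (P : Set E3)
  · exact Or.inl hq₂
  rw [cthickening_coe_finset P hR] at hqR
  rw [cthickening_coe_finset P zero_le_two] at hq₂
  obtain ⟨c, hc, hqc⟩ := Set.mem_iUnion₂.1 hqR
  obtain ⟨x, hx, hmin⟩ := P.exists_min_image (dist q) ⟨c, hc⟩
  have hqx_le : ‖q - x‖ ≤ R := (dist_eq_norm q x).symm.trans_le ((hmin c hc).trans hqc)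
  have hlt_qx : 2 < ‖q - x‖ := by
    rw [← dist_eq_norm]
    exact not_le.1 fun h => hq₂ (Set.mem_iUnion₂.2 ⟨x, hx, h⟩)
  refine Or.inr (Set.mem_iUnion₂.2 ⟨x, hx, fun y hy => ?_, mem_shell.2 ⟨hqx_le, hlt_qx⟩⟩)
  have hxy : ‖q - x‖ ≤ ‖(q - x) - (y - x)‖ := by
    rw [sub_sub_sub_cancel_right, ← dist_eq_norm, ← dist_eq_norm]
    exact hmin y (Finset.mem_of_mem_filter _ hy)
  have hexpand := norm_sub_sq_real (q - x) (y - x)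
  rw [norm_sub_of_mem_touching hy] at hexpand
  have hsq := pow_le_pow_left₀ (norm_nonneg _) hxy 2
  linarith

theorem volume_real_cthickening_le (P : Finset E3) {R : ℝ} (hR : 0 ≤ R) :
    volume.real (Metric.cthickening R (P : Set E3))
      ≤ volume.real (Metric.cthickening 2 (P : Set E3))
        + ∑ x ∈ P, volume.real (freeCone P x ∩ shell 2 R) := by
  have htranslate (x : E3) : volume ((· - x) ⁻¹' (freeCone P x ∩ shell 2 R))
      = volume (freeCone P x ∩ shell 2 R) := by
    simp only [sub_eq_add_neg, measure_preimage_add_right]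
  have hcone_fin : ∀ x ∈ P, volume (freeCone P x ∩ shell 2 R) ≠ ⊤ := fun x _ =>
    ((measure_mono Set.inter_subset_right).trans_lt (volume_shell_ne_top 2 R).lt_top).ne
  have hball_fin := (isCompact_cthickening_coe_finset P 2).measure_lt_top (μ := volume)
  have h : volume (Metric.cthickening R (P : Set E3)) ≤
      volume (Metric.cthickening 2 (P : Set E3)) + ∑ x ∈ P, volume (freeCone P x ∩ shell 2 R) := by
    refine (measure_mono (cthickening_subset_union_freeCone P hR)).trans
      ((measure_union_le _ _).trans ?_)
    gcongr
    simpa only [htranslate] using measure_biUnion_finset_le (μ := volume) P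
      fun x => (· - x) ⁻¹' (freeCone P x ∩ shell 2 R)
  have hsum_fin := ENNReal.sum_ne_top.2 hcone_fin
  simpa only [measureReal_def, ENNReal.toReal_add hball_fin.ne hsum_fin,
    ENNReal.toReal_sum hcone_fin] using ENNReal.toReal_mono (by finiteness) h

theorem twelve_mul_volume_real_cthickening_sub_le {P : Finset E3}
    (hP : ∀ x ∈ P, ∀ y ∈ P, x ≠ y → 2 ≤ dist x y) {R : ℝ} (hR : 2 ≤ R) :
    12 * (volume.real (Metric.cthickening R (P : Set E3))
        - volume.real (Metric.cthickening 2 (P : Set E3)))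
      ≤ (12 * P.card - contactsOrdered P) * ((R ^ 3 - 2 ^ 3) * (Real.pi * 4 / 3)) := by
  have hdeg : (12 * P.card - contactsOrdered P : ℝ) = ∑ x ∈ P, (12 - (touching P x).card : ℝ) := by
    rw [contactsOrdered_eq_sum_card_touching, Finset.sum_sub_distrib, Finset.sum_const,
      nsmul_eq_mul, mul_comm, Nat.cast_sum]
  rw [← volume_real_shell zero_le_two hR, hdeg, Finset.sum_mul]
  calc 12 * (volume.real (Metric.cthickening R (P : Set E3))
        - volume.real (Metric.cthickening 2 (P : Set E3)))
      ≤ 12 * ∑ x ∈ P, volume.real (freeCone P x ∩ shell 2 R) := by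
        linarith [volume_real_cthickening_le P (zero_le_two.trans hR)]
    _ ≤ ∑ x ∈ P, (12 - (touching P x).card) * volume.real (shell 2 R) := by
        rw [Finset.mul_sum]
        exact Finset.sum_le_sum fun x _ =>
          twelve_mul_volume_real_freeCone_inter_shell_le hP x zero_le_two R

theorem card_mul_le_volume_real_cthickening {P : Finset E3}
    (hP : ∀ x ∈ P, ∀ y ∈ P, x ≠ y → 2 ≤ dist x y) :
    P.card * (Real.pi * 4 / 3) ≤ volume.real (Metric.cthickening 2 (P : Set E3)) := by
  have hsub : (⋃ x ∈ P, Metric.ball x 1) ⊆ Metric.cthickening 2 (P : Set E3) := by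
    rw [cthickening_coe_finset P zero_le_two]
    exact Set.iUnion₂_mono fun x _ =>
      Metric.ball_subset_closedBall.trans (Metric.closedBall_subset_closedBall one_le_two)
  have hdisj : (P : Set E3).PairwiseDisjoint fun x => Metric.ball x 1 := fun x hx y hy hxy =>
    Metric.ball_disjoint_ball (one_add_one_eq_two.trans_le (hP x hx y hy hxy))
  have hball (x : E3) : volume.real (Metric.ball x 1) = Real.pi * 4 / 3 := by
    rw [measureReal_def, EuclideanSpace.volume_ball_fin_three, ENNReal.ofReal_one, one_pow, one_mul,
      ENNReal.toReal_ofReal (by positivity)]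
  calc P.card * (Real.pi * 4 / 3) = volume.real (⋃ x ∈ P, Metric.ball x 1) := by
        rw [measureReal_biUnion_finset hdisj (fun _ _ => measurableSet_ball)
          fun _ _ => measure_ball_lt_top.ne]
        simp only [hball, Finset.sum_const, nsmul_eq_mul]
    _ ≤ volume.real (Metric.cthickening 2 (P : Set E3)) :=
        measureReal_mono hsub (isCompact_cthickening_coe_finset P 2).measure_lt_top.ne

theorem volume_real_cthickening_add_le (P : Finset E3) {r R : ℝ} (hr : 0 ≤ r) (hrR : r ≤ R) :
    volume.real (Metric.cthickening r (P : Set E3))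
        + 2 * √3 * (R - r) * volume.real (Metric.cthickening r (P : Set E3)) ^ (2 / 3 : ℝ)
      ≤ volume.real (Metric.cthickening R (P : Set E3)) := by
  simpa only [cthickening_cthickening (sub_nonneg.2 hrR) hr, sub_add_cancel] using
    volume_real_add_le_volume_real_cthickening (isCompact_cthickening_coe_finset P r)
      (sub_nonneg.2 hrR)

theorem rpow_two_thirds_mul_le {n v : ℝ} (hn : 0 ≤ n) (hv : n * (Real.pi * 4 / 3) ≤ v) :
    n ^ (2 / 3 : ℝ) * (Real.pi * 4 / 3) ≤ 81 / 50 * v ^ (2 / 3 : ℝ) := by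
  have hκ_le : Real.pi * 4 / 3 ≤ (81 / 50) ^ (3 : ℝ) := by
    norm_num
    linarith [Real.pi_lt_d2]
  set κ := Real.pi * 4 / 3
  have hκ_pos : 0 < κ := by positivity
  have hroot : κ ^ (1 / 3 : ℝ) ≤ 81 / 50 := by
    rw [one_div]
    exact (Real.rpow_inv_le_iff_of_pos hκ_pos.le (by norm_num) three_pos).2 hκ_le
  calc n ^ (2 / 3 : ℝ) * κ = κ ^ (1 / 3 : ℝ) * (n * κ) ^ (2 / 3 : ℝ) := by
        rw [Real.mul_rpow hn hκ_pos.le, mul_left_comm, ← Real.rpow_add hκ_pos]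
        norm_num
    _ ≤ 81 / 50 * v ^ (2 / 3 : ℝ) := by gcongr

theorem lt_deficit_of_growth_le {n v D : ℝ} (hn : 0 < n) (hv : n * (Real.pi * 4 / 3) ≤ v)
    (h : 12 * (2 * √3 * (11 / 5 - 2) * v ^ (2 / 3 : ℝ))
      ≤ D * (((11 / 5) ^ 3 - 2 ^ 3) * (Real.pi * 4 / 3))) :
    463 / 250 * n ^ (2 / 3 : ℝ) < D := by
  have hv_nonneg : 0 ≤ v := le_trans (by positivity) hv
  have hsqrt : 433 / 250 < √3 := Real.lt_sqrt_of_sq_lt (by norm_num)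
  have hroot := rpow_two_thirds_mul_le hn.le hv
  refine lt_of_mul_lt_mul_right ?_ (show 0 ≤ Real.pi * 4 / 3 by positivity)
  have hsqrt_mul : 433 / 250 * v ^ (2 / 3 : ℝ) ≤ √3 * v ^ (2 / 3 : ℝ) :=
    mul_le_mul_of_nonneg_right hsqrt.le (Real.rpow_nonneg hv_nonneg _)
  have hpos : 0 < n ^ (2 / 3 : ℝ) * (Real.pi * 4 / 3) := by positivity
  linarith

end ContactNumber

/-- For any `n ≥ 2` points in `ℝ³` with pairwise distances at least `2`, the number of
pairs at distance exactly `2` is strictly less than `6n - 0.926 n^(2/3)`. -/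
theorem contact_upper_bound_space (n : ℕ) (hn : 2 ≤ n)
    (P : Finset (EuclideanSpace ℝ (Fin 3))) (hcard : P.card = n)
    (hpack : ∀ x ∈ P, ∀ y ∈ P, x ≠ y → 2 ≤ dist x y) :
    (contactsOrdered P : ℝ) < 2 * (6 * n - 0.926 * (n : ℝ) ^ ((2 : ℝ) / 3)) := by
  subst hcard
  have hgrowth := volume_real_cthickening_add_le P zero_le_two (R := 11 / 5) (by norm_num)
  have hcontacts := twelve_mul_volume_real_cthickening_sub_le hpack (R := 11 / 5) (by norm_num)
  have hvolume := card_mul_le_volume_real_cthickening hpack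
  have hcard_pos : (0 : ℝ) < P.card := Nat.cast_pos.2 (two_pos.trans_le hn)
  have hdeficit := lt_deficit_of_growth_le hcard_pos hvolume
    (D := 12 * P.card - contactsOrdered P) (by linarith)
  linarith
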